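/- arXiv:2205.04303 — 4 statements merged into one kernel-verified Lean document; each statement's English description precedes it below -/
import Mathlib

section
/- Let α ∈ ℝ, let {f_n} be a sequence of cyclic functions for D_α converging to f in the norm of D_α, and assume: (1) for each n the quotient f/f_n is a multiplier of D_α and there exists a constant C > 0 with ‖f/f_n‖_{M(D_α)} ≤ C for all n; (2) ‖1 − f/f_n‖_α → 0 as n → ∞. Then f is cyclic for D_α. -/
open Filter Topology

noncomputable section

/-- Membership in the Dirichlet-type space `D_α`, described via Taylor coefficients. -/
def MemD (α : ℝ) (a : ℕ → ℂ) : Prop :=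
  Summable (fun k : ℕ => ‖a k‖ ^ 2 * ((k : ℝ) + 1) ^ α)

/-- The norm of `D_α`, on coefficient sequences. -/
def DNorm (α : ℝ) (a : ℕ → ℂ) : ℝ :=
  Real.sqrt (∑' k : ℕ, ‖a k‖ ^ 2 * ((k : ℝ) + 1) ^ α)

/-- The inner product of `D_α`, on coefficient sequences. -/
def Dinner (α : ℝ) (a b : ℕ → ℂ) : ℂ :=
  ∑' k : ℕ, a k * (starRingEnd ℂ) (b k) * ((((k : ℝ) + 1) ^ α : ℝ) : ℂ)

/-- Cauchy product of coefficient sequences (coefficients of the product function). -/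
def mulCoeff (a b : ℕ → ℂ) : ℕ → ℂ :=
  fun k => ∑ i ∈ Finset.range (k + 1), a i * b (k - i)

/-- Coefficient sequence of the constant function `1`. -/
def oneCoeff : ℕ → ℂ := fun k => if k = 0 then 1 else 0

/-- `f` is cyclic for (the shift operator on) `D_α`: there are polynomials `p n` with
`‖p n · f - 1‖_α → 0`. -/
def Cyclic (α : ℝ) (f : ℕ → ℂ) : Prop :=
  ∃ p : ℕ → Polynomial ℂ,
    Tendsto (fun n => DNorm α (fun k => mulCoeff (p n).coeff f k - oneCoeff k)) atTop (𝓝 0)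

/-- Coefficients of `S^t f`, where `S` is the shift operator `(Sf)(z) = z f(z)`. -/
def shiftPow (t : ℕ) (a : ℕ → ℂ) : ℕ → ℂ :=
  fun k => if k < t then 0 else a (k - t)

/-- Operator norm of `S^t` on `D_α`. -/
def shiftOpNorm (α : ℝ) (t : ℕ) : ℝ :=
  sSup {r : ℝ | ∃ a : ℕ → ℂ, MemD α a ∧ DNorm α a ≤ 1 ∧ r = DNorm α (shiftPow t a)}

/-- `p` is a `d`-th optimal polynomial approximant to `1/f` in `D_α`. -/
def IsOPA (α : ℝ) (f : ℕ → ℂ) (d : ℕ) (p : Polynomial ℂ) : Prop :=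
  p.natDegree ≤ d ∧
    ∀ q : Polynomial ℂ, q.natDegree ≤ d →
      DNorm α (fun k => mulCoeff p.coeff f k - oneCoeff k) ≤
        DNorm α (fun k => mulCoeff q.coeff f k - oneCoeff k)

/-- The matrix `M` of the linear system determining the `d`-th o.p.a. to `1/f`:
`m_{j,k} = ⟨S^k f, S^j f⟩_α`. -/
def opaMatrix (α : ℝ) (d : ℕ) (f : ℕ → ℂ) : Matrix (Fin (d + 1)) (Fin (d + 1)) ℂ :=
  Matrix.of fun j k => Dinner α (shiftPow (k : ℕ) f) (shiftPow (j : ℕ) f)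

/-- The vector `b` of the linear system determining the `d`-th o.p.a. to `1/f`:
`b_j = ⟨1, S^j f⟩_α`. -/
def opaVec (α : ℝ) (d : ℕ) (f : ℕ → ℂ) : Fin (d + 1) → ℂ :=
  fun j => Dinner α oneCoeff (shiftPow (j : ℕ) f)

/-- Frobenius norm of a complex matrix. -/
def frobNorm {m n : ℕ} (M : Matrix (Fin m) (Fin n) ℂ) : ℝ :=
  Real.sqrt (∑ j, ∑ k, ‖M j k‖ ^ 2)

/-- Euclidean norm on `ℂ^m`. -/
def euclNorm {m : ℕ} (v : Fin m → ℂ) : ℝ :=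
  Real.sqrt (∑ j, ‖v j‖ ^ 2)

/-- `α`-weighted Frobenius norm: the Frobenius norm of the matrix in the orthonormal
basis `{z^k/(k+1)^{α/2}}` of the map whose matrix in `{z^k}` is `M`. -/
def wFrobNorm (α : ℝ) {m : ℕ} (M : Matrix (Fin m) (Fin m) ℂ) : ℝ :=
  Real.sqrt (∑ j, ∑ k, ‖M j k‖ ^ 2 * (((j : ℕ) : ℝ) + 1) ^ α * (((k : ℕ) : ℝ) + 1) ^ (-α))

/-- Coefficients of the reproducing kernel of `D_α` at `w ∈ 𝔻`. -/
def kern (α : ℝ) (w : ℂ) : ℕ → ℂ :=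
  fun k => (starRingEnd ℂ) w ^ k / ((((k : ℝ) + 1) ^ α : ℝ) : ℂ)

lemma dw_pos (α : ℝ) (k : ℕ) : 0 ≤ ((k : ℝ) + 1) ^ α := by positivity

lemma sq_add_bound (α : ℝ) (a b : ℕ → ℂ) (k : ℕ) :
    ‖a k + b k‖ ^ 2 * ((k : ℝ) + 1) ^ α ≤
      2 * (‖a k‖ ^ 2 * ((k : ℝ) + 1) ^ α) + 2 * (‖b k‖ ^ 2 * ((k : ℝ) + 1) ^ α) := by
  have h : ‖a k + b k‖ ^ 2 ≤ 2 * ‖a k‖ ^ 2 + 2 * ‖b k‖ ^ 2 := by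
    have h1 := norm_add_le (a k) (b k)
    have h2 : ‖a k + b k‖ ^ 2 ≤ (‖a k‖ + ‖b k‖) ^ 2 := by gcongr
    nlinarith [sq_nonneg (‖a k‖ - ‖b k‖)]
  have := mul_le_mul_of_nonneg_right h (dw_pos α k)
  linarith

lemma MemD.add' {α : ℝ} {a b : ℕ → ℂ} (ha : MemD α a) (hb : MemD α b) :
    MemD α (fun k => a k + b k) := by
  unfold MemD at *
  refine Summable.of_nonneg_of_le (fun k => by positivity) (sq_add_bound α a b) ?_
  exact (ha.mul_left 2).add (hb.mul_left 2)

lemma DNorm_add_le {α : ℝ} {a b : ℕ → ℂ} (ha : MemD α a) (hb : MemD α b) :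
    DNorm α (fun k => a k + b k) ≤ 2 * (DNorm α a + DNorm α b) := by
  have hab := MemD.add' ha hb
  unfold MemD at *
  have h0 : ∀ c : ℕ → ℂ, 0 ≤ ∑' k : ℕ, ‖c k‖ ^ 2 * ((k : ℝ) + 1) ^ α :=
    fun c => tsum_nonneg (fun k => by positivity)
  have h := hab.tsum_le_tsum (sq_add_bound α a b) ((ha.mul_left 2).add (hb.mul_left 2))
  rw [(ha.mul_left 2).tsum_add (hb.mul_left 2), tsum_mul_left, tsum_mul_left] at h
  unfold DNorm
  refine Real.sqrt_le_iff.mpr ⟨by positivity, h.trans ?_⟩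
  have e1 := Real.sq_sqrt (h0 a)
  have e2 := Real.sq_sqrt (h0 b)
  have p1 := Real.sqrt_nonneg (∑' k : ℕ, ‖a k‖ ^ 2 * ((k : ℝ) + 1) ^ α)
  have p2 := Real.sqrt_nonneg (∑' k : ℕ, ‖b k‖ ^ 2 * ((k : ℝ) + 1) ^ α)
  nlinarith [mul_nonneg p1 p2]

lemma MemD.smul' {α : ℝ} {a : ℕ → ℂ} (c : ℂ) (ha : MemD α a) :
    MemD α (fun k => c * a k) := by
  unfold MemD at *
  refine (ha.mul_left (‖c‖ ^ 2)).congr (fun k => ?_)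
  rw [norm_mul]; ring

lemma memD_one (α : ℝ) : MemD α oneCoeff := by
  unfold MemD
  refine summable_of_ne_finset_zero (s := {0}) (fun k hk => ?_)
  have : k ≠ 0 := by simpa using hk
  simp [oneCoeff, this]

lemma weight_succ_le (α : ℝ) (k : ℕ) :
    (((k + 1 : ℕ) : ℝ) + 1) ^ α ≤ 2 ^ |α| * ((k : ℝ) + 1) ^ α := by
  have hk : (0 : ℝ) < (k : ℝ) + 1 := by positivity
  have e : (((k + 1 : ℕ) : ℝ) + 1) = ((k : ℝ) + 2) / (k + 1) * (k + 1) := by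
    field_simp; push_cast; ring
  have r1 : 1 ≤ ((k : ℝ) + 2) / (k + 1) := by rw [le_div_iff₀ hk]; linarith
  have r2 : ((k : ℝ) + 2) / (k + 1) ≤ 2 := by
    rw [div_le_iff₀ hk]; have : (0 : ℝ) ≤ k := by positivity
    linarith
  rw [e, Real.mul_rpow (by positivity) hk.le]
  gcongr
  exact (Real.rpow_le_rpow_of_exponent_le r1 (le_abs_self α)).trans
    (Real.rpow_le_rpow (by positivity) r2 (abs_nonneg α))

lemma memD_X_mul {α : ℝ} {F : PowerSeries ℂ} (hF : MemD α (fun k => PowerSeries.coeff k F)) :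
    MemD α (fun k => PowerSeries.coeff k (PowerSeries.X * F)) := by
  unfold MemD at *
  rw [← summable_nat_add_iff 1]
  refine Summable.of_nonneg_of_le (fun k => by positivity) (fun k => ?_)
    (hF.mul_left (2 ^ |α|))
  beta_reduce
  rw [PowerSeries.coeff_succ_X_mul]
  have := mul_le_mul_of_nonneg_left (weight_succ_le α k)
    (sq_nonneg ‖PowerSeries.coeff k F‖)
  linarith

lemma memD_poly_mul {α : ℝ} {F : PowerSeries ℂ} (hF : MemD α (fun k => PowerSeries.coeff k F))
    (p : Polynomial ℂ) :
    MemD α (fun k => PowerSeries.coeff k ((p : PowerSeries ℂ) * F)) := by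
  induction p using Polynomial.induction_on with
  | C a =>
    simp only [Polynomial.coe_C, PowerSeries.coeff_C_mul]
    exact hF.smul' a
  | add p q hp hq =>
    simp only [Polynomial.coe_add, add_mul, map_add]
    exact hp.add' hq
  | monomial n a h =>
    have e : ((Polynomial.C a * Polynomial.X ^ (n + 1) : Polynomial ℂ) : PowerSeries ℂ) * F =
        PowerSeries.X * (((Polynomial.C a * Polynomial.X ^ n : Polynomial ℂ) : PowerSeries ℂ) * F) := by
      simp only [Polynomial.coe_mul, Polynomial.coe_pow, Polynomial.coe_X]
      ring
    rw [e]
    exact memD_X_mul h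

lemma mulCoeff_eq (a b : ℕ → ℂ) :
    mulCoeff a b = fun k => PowerSeries.coeff k (PowerSeries.mk a * PowerSeries.mk b) := by
  funext k
  rw [PowerSeries.coeff_mul, Finset.Nat.sum_antidiagonal_eq_sum_range_succ_mk]
  simp [mulCoeff]

lemma mk_mulCoeff (a b : ℕ → ℂ) :
    PowerSeries.mk (mulCoeff a b) = PowerSeries.mk a * PowerSeries.mk b := by
  ext k; rw [mulCoeff_eq]; simp

lemma mk_one : PowerSeries.mk oneCoeff = 1 := by
  ext k; simp [oneCoeff, PowerSeries.coeff_one]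

lemma mk_poly (p : Polynomial ℂ) : PowerSeries.mk p.coeff = (p : PowerSeries ℂ) := by
  ext k; simp

lemma memD_mulCoeff_poly {α : ℝ} {f : ℕ → ℂ} (hf : MemD α f) (p : Polynomial ℂ) :
    MemD α (mulCoeff p.coeff f) := by
  rw [mulCoeff_eq, mk_poly]
  exact memD_poly_mul (by simpa using hf) p

lemma MemD.sub' {α : ℝ} {a b : ℕ → ℂ} (ha : MemD α a) (hb : MemD α b) :
    MemD α (fun k => a k - b k) := by
  simpa [sub_eq_add_neg] using ha.add' (hb.smul' (-1))

lemma DNorm_sub_comm (α : ℝ) (a b : ℕ → ℂ) :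
    DNorm α (fun k => a k - b k) = DNorm α (fun k => b k - a k) := by
  unfold DNorm
  simp only [norm_sub_rev]

lemma key_identity (p : Polynomial ℂ) (q g f : ℕ → ℂ) (h : mulCoeff q g = f) :
    (fun k => mulCoeff p.coeff f k - oneCoeff k) =
      fun k => mulCoeff q (fun k => mulCoeff p.coeff g k - oneCoeff k) k
        + (q k - oneCoeff k) := by
  have hs : ∀ a b : ℕ → ℂ, PowerSeries.mk (fun k => a k - b k) =
      PowerSeries.mk a - PowerSeries.mk b := fun a b => by ext k; simp
  have ha : ∀ a b : ℕ → ℂ, PowerSeries.mk (fun k => a k + b k) =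
      PowerSeries.mk a + PowerSeries.mk b := fun a b => by ext k; simp
  have hinj : ∀ a b : ℕ → ℂ, PowerSeries.mk a = PowerSeries.mk b → a = b := by
    intro a b hab; funext k
    simpa using congrArg (PowerSeries.coeff k) hab
  apply hinj
  rw [ha, hs, hs, mk_mulCoeff, mk_mulCoeff, hs, mk_mulCoeff, ← h, mk_mulCoeff, mk_one]
  ring

/-- If `f_n` are cyclic for `D_α`, `f_n → f` in `D_α`, each quotient `q n = f / f_n` is a
multiplier of `D_α` with multiplier norm at most `C`, and `‖1 - f/f_n‖_α → 0`, then `f`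
is cyclic for `D_α`. -/
theorem cyclic_of_limit (α : ℝ) (f : ℕ → ℂ) (fn : ℕ → ℕ → ℂ) (q : ℕ → ℕ → ℂ) (C : ℝ)
    (hC : 0 < C)
    (hf : MemD α f) (hfn : ∀ n, MemD α (fn n))
    (hcyc : ∀ n, Cyclic α (fn n))
    (hconv : Tendsto (fun n => DNorm α (fun k => fn n k - f k)) atTop (𝓝 0))
    (hq : ∀ n, mulCoeff (q n) (fn n) = f)
    (hmul : ∀ n, ∀ h : ℕ → ℂ, MemD α h → MemD α (mulCoeff (q n) h))
    (hbd : ∀ n, ∀ h : ℕ → ℂ, MemD α h → DNorm α (mulCoeff (q n) h) ≤ C * DNorm α h)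
    (hqone : Tendsto (fun n => DNorm α (fun k => oneCoeff k - q n k)) atTop (𝓝 0)) :
    Cyclic α f := by
  have key : ∀ m : ℕ, ∃ p : Polynomial ℂ,
      DNorm α (fun k => mulCoeff p.coeff f k - oneCoeff k) < 1 / ((m : ℝ) + 1) := by
    intro m
    have hε : (0 : ℝ) < 1 / ((m : ℝ) + 1) := by positivity
    set ε := 1 / ((m : ℝ) + 1)
    obtain ⟨n, hn⟩ := (hqone.eventually (gt_mem_nhds (show (0 : ℝ) < ε / 4 by positivity))).exists
    obtain ⟨p, hp⟩ := hcyc n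
    obtain ⟨j, hj⟩ := (hp.eventually
      (gt_mem_nhds (show (0 : ℝ) < ε / (4 * C) by positivity))).exists
    refine ⟨p j, ?_⟩
    have hm : MemD α (fun k => mulCoeff (p j).coeff (fn n) k - oneCoeff k) :=
      (memD_mulCoeff_poly (hfn n) (p j)).sub' (memD_one α)
    have hqn : MemD α (q n) := by
      have h1 := hmul n oneCoeff (memD_one α)
      rw [mulCoeff_eq, mk_one, mul_one] at h1
      simpa using h1
    have h1 := DNorm_add_le (hmul n _ hm) (hqn.sub' (memD_one α))
    rw [key_identity (p j) (q n) (fn n) f (hq n)]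
    have h2 := hbd n _ hm
    rw [DNorm_sub_comm] at hn
    have h3 := mul_lt_mul_of_pos_left hj hC
    have h4 : C * (ε / (4 * C)) = ε / 4 := by field_simp
    linarith
  choose p hp using key
  refine ⟨p, squeeze_zero (fun n => Real.sqrt_nonneg _) (fun n => (hp n).le) ?_⟩
  exact tendsto_one_div_add_atTop_nhds_zero_nat
end
end

section
/- For every α ∈ ℝ there exist a function f ∈ D_α and a sequence {f_n} ⊂ D_α such that each f_n is cyclic for D_α, ‖f_n − f‖_α → 0 as n → ∞, f has no zeros in the open unit disc 𝔻, and yet f is not cyclic for D_α. In particular, cyclicity is not preserved by norm convergence in D_α, even when the limit function is zero-free in 𝔻. -/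
open Filter Topology

noncomputable section

namespace CycAux

open PowerSeries

/-- `ψ` converges on the unit disc with sum `F`. -/
def HS (ψ : PowerSeries ℂ) (F : ℂ → ℂ) : Prop :=
  ∀ z : ℂ, ‖z‖ < 1 → HasSum (fun k : ℕ => PowerSeries.coeff k ψ * z ^ k) (F z)

/-- Taylor series at 0. -/
def tay (F : ℂ → ℂ) : PowerSeries ℂ :=
  PowerSeries.mk fun k => ((k.factorial : ℂ))⁻¹ * iteratedDeriv k F 0

lemma hs_tay {F : ℂ → ℂ} (hF : DifferentiableOn ℂ F (Metric.ball 0 1)) : HS (tay F) F := by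
  intro z hz
  have := Complex.hasSum_taylorSeries_on_ball hF (z := z) (by simpa using hz)
  convert! this using 2 with k
  simp only [tay, coeff_mk, smul_eq_mul, sub_zero]; ring

lemma hs_fps {ψ : PowerSeries ℂ} {F : ℂ → ℂ} (h : HS ψ F) :
    HasFPowerSeriesAt F (FormalMultilinearSeries.ofScalars ℂ (fun k => PowerSeries.coeff k ψ)) 0 := by
  refine ⟨1/2, ?_⟩
  refine ⟨?_, by simp, ?_⟩
  · have h1 := (h (1/2) (by norm_num)).summable
    have h2 : Summable fun n => ‖FormalMultilinearSeries.ofScalars ℂ (fun k => PowerSeries.coeff k ψ) n‖ * (((1/2 : NNReal)):ℝ) ^ n := by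
      refine h1.norm.congr ?_
      intro n
      simp
    have := FormalMultilinearSeries.le_radius_of_summable_norm _ h2
    simpa using this
  · intro y hy
    have hy' : ‖y‖ < 1 := by
      have : ‖y‖ₑ < 1/2 := by simpa using hy
      have h3 : ‖y‖ₑ < 1 := this.trans_le (by simp)
      have := (enorm_lt_coe (r := 1)).1 (by simpa using h3)
      exact_mod_cast this
    have := h y hy'
    rw [zero_add]
    convert! this using 2 with n
    simp [mul_comm]

lemma hs_uniq {ψ χ : PowerSeries ℂ} {F : ℂ → ℂ} (h : HS ψ F) (h' : HS χ F) : ψ = χ := by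
  have := (hs_fps h).eq_formalMultilinearSeries (hs_fps h')
  have := FormalMultilinearSeries.ofScalars_series_injective ℂ ℂ this
  ext n
  exact congrFun this n

lemma hs_congr {ψ : PowerSeries ℂ} {F G : ℂ → ℂ} (h : HS ψ F) (hFG : ∀ z, ‖z‖ < 1 → F z = G z) :
    HS ψ G := fun z hz => hFG z hz ▸ h z hz

lemma hs_mul {ψ χ : PowerSeries ℂ} {F G : ℂ → ℂ} (h : HS ψ F) (h' : HS χ G) :
    HS (ψ * χ) (fun z => F z * G z) := by
  intro z hz
  have a1 := (h z hz)
  have a2 := (h' z hz)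
  have key := tsum_mul_tsum_eq_tsum_sum_antidiagonal_of_summable_norm a1.summable.norm a2.summable.norm
  have ks := (summable_norm_sum_mul_antidiagonal_of_summable_norm a1.summable.norm a2.summable.norm).of_norm
  rw [a1.tsum_eq, a2.tsum_eq] at key
  change HasSum _ (F z * G z)
  rw [key]
  convert! ks.hasSum using 2 with n
  rw [PowerSeries.coeff_mul, Finset.sum_mul]
  refine Finset.sum_congr rfl ?_
  intro x hx
  rw [← Finset.HasAntidiagonal.mem_antidiagonal.1 hx, pow_add]; ring

lemma hs_X : HS X (fun z => z) := by
  intro z hz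
  have := hasSum_single (f := fun k : ℕ => PowerSeries.coeff k (X : PowerSeries ℂ) * z ^ k) 1 (by
    intro k hk
    simp [PowerSeries.coeff_X, hk])
  simpa using this

lemma hs_C (c : ℂ) : HS (C c) (fun _ => c) := by
  intro z hz
  have := hasSum_single (f := fun k : ℕ => PowerSeries.coeff k (C c : PowerSeries ℂ) * z ^ k) 0 (by
    intro k hk
    simp [PowerSeries.coeff_C, hk])
  simpa using this

lemma hs_sub {ψ χ : PowerSeries ℂ} {F G : ℂ → ℂ} (h : HS ψ F) (h' : HS χ G) :
    HS (ψ - χ) (fun z => F z - G z) := by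
  intro z hz
  convert! (h z hz).sub (h' z hz) using 2 with n
  simp [sub_mul]

lemma hs_pow {ψ : PowerSeries ℂ} {F : ℂ → ℂ} (h : HS ψ F) (n : ℕ) :
    HS (ψ ^ n) (fun z => F z ^ n) := by
  induction n with
  | zero => simpa using hs_C 1
  | succ n ih => simpa [pow_succ] using hs_mul ih h

lemma hs_one_sub : HS (1 - X) (fun z => 1 - z) := by
  simpa using hs_sub (hs_C 1) hs_X

lemma tay_deriv (F : ℂ → ℂ) : derivative ℂ (tay F) = tay (deriv F) := by
  ext n
  rw [PowerSeries.coeff_derivative]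
  simp only [tay, coeff_mk]
  rw [iteratedDeriv_succ', Nat.factorial_succ]
  have : (n.factorial : ℂ) ≠ 0 := by exact_mod_cast n.factorial_ne_zero
  have : (n + 1 : ℂ) ≠ 0 := by exact_mod_cast n.succ_ne_zero
  push_cast
  field_simp

/-- atomic singular inner function -/
def Sf (z : ℂ) : ℂ := Complex.exp (-((1 + z) / (1 - z)))

lemma one_sub_ne {z : ℂ} (hz : ‖z‖ < 1) : 1 - z ≠ 0 := by
  intro h
  rw [sub_eq_zero] at h
  rw [← h] at hz; simp at hz

lemma Sf_hasDeriv {z : ℂ} (hz : z ≠ 1) : HasDerivAt Sf (-2 / (1 - z) ^ 2 * Sf z) z := by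
  have h1 : (1 : ℂ) - z ≠ 0 := sub_ne_zero.2 hz.symm
  have h2 : HasDerivAt (fun z : ℂ => -((1 + z) / (1 - z))) (-2 / (1 - z) ^ 2) z := by
    have := (((hasDerivAt_id z).const_add 1).div ((hasDerivAt_id z).const_sub 1) (by simpa using h1)).neg
    convert! this using 1
    simp only [id]; field_simp; ring
  have := h2.cexp
  simp only [Sf]
  convert! this using 1
  ring

lemma ne_one {z : ℂ} (hz : ‖z‖ < 1) : z ≠ 1 := by
  rintro rfl; simp at hz

lemma Sf_diff : DifferentiableOn ℂ Sf (Metric.ball 0 1) := fun z hz =>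
  (Sf_hasDeriv (ne_one (by simpa using hz))).differentiableAt.differentiableWithinAt

lemma Sf_norm {z : ℂ} (hz : ‖z‖ < 1) : ‖Sf z‖ ≤ 1 := by
  rw [Sf, Complex.norm_exp, Real.exp_le_one_iff, Complex.neg_re, neg_nonpos, Complex.div_re,
    ← add_div]
  apply div_nonneg _ (Complex.normSq_nonneg _)
  have : Complex.normSq z < 1 := by
    rw [Complex.normSq_eq_norm_sq]; nlinarith [norm_nonneg z]
  rw [Complex.normSq_apply] at this
  simp
  nlinarith

/-- Taylor series of `Sf`. -/
def phi : PowerSeries ℂ := tay Sf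

lemma phi_ode : (1 - X) ^ 2 * derivative ℂ phi = C (-2) * phi := by
  have hd : DifferentiableOn ℂ (deriv Sf) (Metric.ball 0 1) := Sf_diff.deriv Metric.isOpen_ball
  have h1 : HS (derivative ℂ phi) (deriv Sf) := by
    rw [phi, tay_deriv]; exact hs_tay hd
  refine hs_uniq (hs_congr (hs_mul (hs_pow hs_one_sub 2) h1) ?_) (hs_mul (hs_C (-2)) (hs_tay Sf_diff))
  intro z hz
  rw [(Sf_hasDeriv (ne_one hz)).deriv]
  have := one_sub_ne hz
  field_simp

lemma phi_bound (k : ℕ) : ‖coeff k phi‖ ≤ 1 := by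
  have h : ∀ r : ℝ, r ∈ Set.Ioo (0:ℝ) 1 → ‖coeff k phi‖ * r ^ k ≤ 1 := by
    intro r hr
    have hsub : Metric.closedBall (0:ℂ) r ⊆ Metric.ball 0 1 := Metric.closedBall_subset_ball hr.2
    have := Complex.norm_iteratedDeriv_le_of_forall_mem_sphere_norm_le (c := 0) (R := r) (C := 1)
      (f := Sf) k hr.1 ((Sf_diff.mono hsub).diffContOnCl_ball subset_rfl) (by
        intro z hz
        apply Sf_norm
        have : ‖z‖ = r := by simpa using hz
        rw [this]; exact hr.2)
    simp only [phi, tay, coeff_mk, norm_mul, norm_inv, Complex.norm_natCast]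
    have hk : (0:ℝ) < k.factorial := by exact_mod_cast k.factorial_pos
    have hrk : 0 < r ^ k := pow_pos hr.1 k
    rw [le_div_iff₀ hrk] at this
    calc _ = (k.factorial : ℝ)⁻¹ * (‖iteratedDeriv k Sf 0‖ * r ^ k) := by ring
      _ ≤ (k.factorial : ℝ)⁻¹ * (k.factorial * 1) := by gcongr
      _ = 1 := by field_simp
  have ht : Tendsto (fun r : ℝ => ‖coeff k phi‖ * r ^ k) (𝓝[<] 1) (𝓝 (‖coeff k phi‖ * 1 ^ k)) := by
    apply Tendsto.mono_left _ nhdsWithin_le_nhds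
    exact (Continuous.tendsto (by fun_prop) _)
  have := le_of_tendsto ht (by
    filter_upwards [Ioo_mem_nhdsLT (show (0:ℝ) < 1 by norm_num)] with r hr using h r hr)
  simpa using this

/-- coefficients decay like `(k+1)^{-A}` -/
def Dec (A : ℕ) (ψ : PowerSeries ℂ) : Prop :=
  ∃ K : ℝ, 0 ≤ K ∧ ∀ k : ℕ, ‖coeff k ψ‖ ≤ K / ((k : ℝ) + 1) ^ A

lemma dec_add {A : ℕ} {ψ χ : PowerSeries ℂ} (h : Dec A ψ) (h' : Dec A χ) : Dec A (ψ + χ) := by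
  obtain ⟨K, hK, h⟩ := h
  obtain ⟨L, hL, h'⟩ := h'
  refine ⟨K + L, by positivity, fun k => ?_⟩
  rw [map_add, add_div]
  exact (norm_add_le _ _).trans (add_le_add (h k) (h' k))

lemma dec_C {A : ℕ} (c : ℂ) {ψ : PowerSeries ℂ} (h : Dec A ψ) : Dec A (C c * ψ) := by
  obtain ⟨K, hK, h⟩ := h
  refine ⟨‖c‖ * K, by positivity, fun k => ?_⟩
  rw [coeff_C_mul, norm_mul, mul_div_assoc]
  exact mul_le_mul_of_nonneg_left (h k) (norm_nonneg _)

lemma dec_aux (A k : ℕ) (K : ℝ) (hK : 0 ≤ K) :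
    K / ((k : ℝ) + 1) ^ A ≤ 2 ^ A * K / (((k + 1 : ℕ) : ℝ) + 1) ^ A := by
  rw [div_le_div_iff₀ (by positivity) (by positivity)]
  have : (((k + 1 : ℕ) : ℝ) + 1) ^ A ≤ (2 * ((k : ℝ) + 1)) ^ A := by
    gcongr; push_cast; linarith [Nat.cast_nonneg (α := ℝ) k]
  rw [mul_pow] at this
  nlinarith

lemma dec_X {A : ℕ} {ψ : PowerSeries ℂ} (h : Dec A ψ) : Dec A (X * ψ) := by
  obtain ⟨K, hK, h⟩ := h
  refine ⟨2 ^ A * K, by positivity, fun k => ?_⟩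
  cases k with
  | zero => simp; positivity
  | succ k =>
    rw [coeff_succ_X_mul]
    exact (h k).trans (dec_aux A k K hK)

lemma dec_deriv {A : ℕ} {ψ : PowerSeries ℂ} (h : Dec A (derivative ℂ ψ)) : Dec (A + 1) ψ := by
  obtain ⟨K, hK, h⟩ := h
  refine ⟨2 ^ (A + 1) * K + ‖coeff 0 ψ‖, by positivity, fun k => ?_⟩
  cases k with
  | zero => simp; positivity
  | succ k =>
    have h1 := h k
    rw [PowerSeries.coeff_derivative, norm_mul] at h1
    have h2 : ‖(k : ℂ) + 1‖ = (k : ℝ) + 1 := by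
      have := Complex.norm_natCast (k + 1)
      push_cast at this; exact this
    rw [h2] at h1
    have h3 : ‖coeff (k + 1) ψ‖ ≤ K / ((k : ℝ) + 1) ^ (A + 1) := by
      rw [pow_succ, ← div_div, le_div_iff₀ (by positivity)]; exact h1
    refine (h3.trans (dec_aux (A + 1) k K hK)).trans ?_
    gcongr
    linarith [norm_nonneg (coeff 0 ψ)]

lemma dec_poly {A : ℕ} {ψ : PowerSeries ℂ} (h : Dec A ψ) (p : Polynomial ℂ) :
    Dec A ((p : PowerSeries ℂ) * ψ) := by
  induction p using Polynomial.induction_on' with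
  | add p q hp hq => rw [Polynomial.coe_add, add_mul]; exact dec_add hp hq
  | monomial n a =>
    rw [← Polynomial.C_mul_X_pow_eq_monomial]
    simp only [Polynomial.coe_mul, Polynomial.coe_C, Polynomial.coe_pow, Polynomial.coe_X, mul_assoc]
    apply dec_C
    induction n with
    | zero => simpa using h
    | succ n ih => rw [pow_succ', mul_assoc]; exact dec_X ih

lemma dec_one_sub {A : ℕ} {ψ : PowerSeries ℂ} (h : Dec A ψ) : Dec A ((1 - X) * ψ) := by
  have := dec_poly h (1 - Polynomial.X)
  rwa [Polynomial.coe_sub, Polynomial.coe_one, Polynomial.coe_X] at this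

/-- the series of `(1-z)^N Sf z` -/
def fs (N : ℕ) : PowerSeries ℂ := (1 - X) ^ N * phi

lemma fs_hs (N : ℕ) : HS (fs N) (fun z => (1 - z) ^ N * Sf z) :=
  hs_mul (hs_pow hs_one_sub N) (hs_tay Sf_diff)

lemma fs_deriv (N : ℕ) :
    (1 - X) * derivative ℂ (fs (N + 1)) = C (-(N + 1 : ℂ)) * fs (N + 1) + C (-2) * fs N := by
  have h := phi_ode
  have hd : derivative ℂ ((1 - X : PowerSeries ℂ)) = -1 := by
    rw [map_sub, derivative_X]; simp
  have hd2 : derivative ℂ ((1 - X : PowerSeries ℂ) ^ (N + 1)) = - C (N + 1 : ℂ) * (1 - X) ^ N := by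
    rw [Derivation.leibniz_pow, hd]; simp; ring
  rw [fs, fs, Derivation.leibniz, hd2]
  simp only [smul_eq_mul]
  rw [map_neg]
  linear_combination (1 - X) ^ N * h

lemma fs_deriv2 (N : ℕ) :
    derivative ℂ (fs (N + 2)) = C (-(N + 2 : ℂ)) * fs (N + 1) + C (-2) * fs N := by
  have h := fs_deriv (N + 1)
  have h1 : (1 - X : PowerSeries ℂ) ≠ 0 := by
    intro h
    have := congrArg (coeff 0) h
    simp at this
  apply mul_left_cancel₀ h1
  rw [h]
  simp only [fs, Nat.cast_add, Nat.cast_one]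
  rw [show (-((N:ℂ) + 1 + 1)) = -((N:ℂ) + 2) by ring]
  ring

lemma fs_dec (A : ℕ) : Dec A (fs (2 * A)) := by
  induction A with
  | zero => exact ⟨1, zero_le_one, fun k => by simpa [fs] using phi_bound k⟩
  | succ A ih =>
    have h1 : Dec A (fs (2 * A + 1)) := by
      have := dec_one_sub ih
      rwa [fs, ← mul_assoc, ← pow_succ'] at this
    apply dec_deriv
    rw [show 2 * (A + 1) = 2 * A + 2 by ring, fs_deriv2]
    exact dec_add (dec_C _ h1) (dec_C _ ih)

lemma fs_ne (N : ℕ) : coeff (N + 1) (fs N) ≠ 0 := by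
  induction N with
  | zero =>
    simp only [fs, pow_zero, one_mul, phi, tay, coeff_mk, zero_add, iteratedDeriv_one]
    rw [(Sf_hasDeriv (by norm_num)).deriv]
    simp [Sf]
  | succ N ih =>
    have h := congrArg (coeff (N + 1)) (fs_deriv N)
    rw [sub_mul, one_mul, map_sub, coeff_succ_X_mul, map_add, coeff_C_mul, coeff_C_mul,
      PowerSeries.coeff_derivative, PowerSeries.coeff_derivative] at h
    intro h0
    rw [h0] at h
    apply ih
    push_cast at h
    linear_combination (1/2 : ℂ) * h


open MeasureTheory in
lemma swap_int {a : ℕ → ℂ} (ha : Summable fun k => ‖a k‖) {e h : ℝ → ℂ} (he : Continuous e)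
    (he1 : ∀ t, ‖e t‖ = 1) (hh : Continuous h) (M : ℝ) (hM : ∀ t, ‖h t‖ ≤ M) :
    HasSum (fun k => a k * ∫ t in (0:ℝ)..(2 * Real.pi), e t ^ k * h t)
      (∫ t in (0:ℝ)..(2 * Real.pi), (∑' k, a k * e t ^ k) * h t) := by
  have hsum : ∀ t, Summable fun k => a k * e t ^ k := by
    intro t
    apply Summable.of_norm
    simpa [he1] using ha
  have := intervalIntegral.hasSum_integral_of_dominated_convergence
    (μ := volume) (a := (0:ℝ)) (b := 2 * Real.pi)
    (F := fun k t => a k * (e t ^ k * h t)) (f := fun t => (∑' k, a k * e t ^ k) * h t)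
    (bound := fun k _ => ‖a k‖ * M) ?_ ?_ ?_ ?_ ?_
  · simpa only [intervalIntegral.integral_const_mul] using this
  · intro k
    exact (Continuous.aestronglyMeasurable (by fun_prop))
  · intro k
    refine Filter.Eventually.of_forall fun t _ => ?_
    rw [norm_mul, norm_mul, norm_pow, he1, one_pow, one_mul]
    exact mul_le_mul_of_nonneg_left (hM t) (norm_nonneg _)
  · exact Filter.Eventually.of_forall fun t _ => ha.mul_right M
  · simp
  · refine Filter.Eventually.of_forall fun t _ => ?_
    have := (hsum t).hasSum.mul_right (h t)
    simpa only [mul_assoc] using this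

/-- `e^{it}` -/
def ee (t : ℝ) : ℂ := Complex.exp (t * Complex.I)

lemma ee_cont : Continuous ee := by unfold ee; fun_prop
lemma ee_norm (t : ℝ) : ‖ee t‖ = 1 := Complex.norm_exp_ofReal_mul_I t
lemma ee_ne (t : ℝ) : ee t ≠ 0 := Complex.exp_ne_zero _

lemma ee_int (n : ℕ) (hn : n ≠ 0) : ∫ t in (0:ℝ)..(2 * Real.pi), ee t ^ n = 0 := by
  have h1 : (n : ℂ) * Complex.I ≠ 0 := by simp [hn]
  have := integral_exp_mul_complex (a := 0) (b := 2 * Real.pi) h1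
  have h2 : ∀ t : ℝ, ee t ^ n = Complex.exp ((n : ℂ) * Complex.I * t) := by
    intro t; rw [ee, ← Complex.exp_nat_mul]; congr 1; ring
  simp only [h2]
  rw [this]
  have h3 : Complex.exp ((n : ℂ) * Complex.I * ((2 * Real.pi : ℝ) : ℂ)) = 1 := by
    rw [Complex.exp_eq_one_iff]
    exact ⟨n, by push_cast; ring⟩
  rw [h3]; simp

lemma ee_int_inv (n : ℕ) (hn : n ≠ 0) : ∫ t in (0:ℝ)..(2 * Real.pi), (ee t)⁻¹ ^ n = 0 := by
  have h1 : -(n : ℂ) * Complex.I ≠ 0 := by simp [hn]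
  have := integral_exp_mul_complex (a := 0) (b := 2 * Real.pi) h1
  have h2 : ∀ t : ℝ, (ee t)⁻¹ ^ n = Complex.exp (-(n : ℂ) * Complex.I * t) := by
    intro t; rw [ee, ← Complex.exp_neg, ← Complex.exp_nat_mul]; congr 1; ring
  simp only [h2]
  rw [this]
  have h3 : Complex.exp (-(n : ℂ) * Complex.I * ((2 * Real.pi : ℝ) : ℂ)) = 1 := by
    rw [Complex.exp_eq_one_iff]
    exact ⟨-n, by push_cast; ring⟩
  rw [h3]; simp

lemma ee_int2 (k m : ℕ) : ∫ t in (0:ℝ)..(2 * Real.pi), (ee t)⁻¹ ^ k * ee t ^ m =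
    if k = m then (2 * Real.pi : ℂ) else 0 := by
  rcases lt_trichotomy k m with h | h | h
  · rw [if_neg h.ne, ← ee_int (m - k) (by omega)]
    congr 1; ext t
    have := ee_ne t
    obtain ⟨d, rfl⟩ := Nat.exists_eq_add_of_lt h
    rw [show k + d + 1 - k = d + 1 by omega, add_assoc, pow_add (ee t) k, ← mul_assoc, ← mul_pow,
      inv_mul_cancel₀ this]; simp
  · subst h
    have : ∀ t, (ee t)⁻¹ ^ k * ee t ^ k = 1 := fun t => by
      rw [← mul_pow, inv_mul_cancel₀ (ee_ne t), one_pow]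
    simp only [this]; simp
  · rw [if_neg h.ne', ← ee_int_inv (k - m) (by omega)]
    congr 1; ext t
    have := ee_ne t
    obtain ⟨d, rfl⟩ := Nat.exists_eq_add_of_lt h
    rw [show m + d + 1 - m = d + 1 by omega, add_assoc, pow_add _ m, mul_right_comm, ← mul_pow,
      inv_mul_cancel₀ this]; simp

lemma series_cont {a : ℕ → ℂ} (ha : Summable fun k => ‖a k‖) :
    ContinuousOn (fun z : ℂ => ∑' k, a k * z ^ k) (Metric.closedBall 0 1) := by
  refine continuousOn_tsum (u := fun k => ‖a k‖) ?_ ha ?_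
  · intro k; fun_prop
  · intro k z hz
    rw [norm_mul, norm_pow]
    have : ‖z‖ ≤ 1 := by simpa using hz
    exact mul_le_of_le_one_right (norm_nonneg _) (pow_le_one₀ (norm_nonneg _) this)

lemma bdry {N : ℕ} (ha : Summable fun k => ‖coeff k (fs N)‖) {z : ℂ} (hz : ‖z‖ = 1) (hz1 : z ≠ 1) :
    ∑' k, coeff k (fs N) * z ^ k = (1 - z) ^ N * Sf z := by
  have hc := series_cont ha z (by simp [hz])
  have ht : Tendsto (fun r : ℝ => (r : ℂ) * z) (𝓝[<] 1) (𝓝 z) := by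
    have : Tendsto (fun r : ℝ => (r : ℂ) * z) (𝓝 1) (𝓝 (((1:ℝ) : ℂ) * z)) :=
      Continuous.tendsto (by fun_prop) _
    simpa using this.mono_left nhdsWithin_le_nhds
  have hlt : ∀ᶠ r : ℝ in 𝓝[<] 1, ‖(r : ℂ) * z‖ < 1 := by
    filter_upwards [Ioo_mem_nhdsLT (show (0:ℝ) < 1 by norm_num)] with r hr
    rw [norm_mul, hz, mul_one, Complex.norm_real, Real.norm_eq_abs, abs_of_pos hr.1]; exact hr.2
  have ht' : Tendsto (fun r : ℝ => (r : ℂ) * z) (𝓝[<] 1) (𝓝[Metric.closedBall 0 1] z) := by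
    refine tendsto_nhdsWithin_iff.2 ⟨ht, ?_⟩
    filter_upwards [hlt] with r hr
    simpa using hr.le
  have t1 := hc.tendsto.comp ht'
  have hSc : ContinuousAt (fun z => (1 - z) ^ N * Sf z) z :=
    ContinuousAt.mul (by fun_prop) (Sf_hasDeriv hz1).continuousAt
  have t2 := hSc.tendsto.comp ht
  refine tendsto_nhds_unique (t1.congr' ?_) t2
  filter_upwards [hlt] with r hr
  exact (fs_hs N _ hr).tsum_eq

lemma Sf_mul_inv {z : ℂ} (hz : z ≠ 0) (hz1 : z ≠ 1) : Sf z * Sf z⁻¹ = 1 := by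
  rw [Sf, Sf, ← Complex.exp_add, Complex.exp_eq_one_iff]
  refine ⟨0, ?_⟩
  have h1 : 1 - z ≠ 0 := sub_ne_zero.2 hz1.symm
  have h2 : z - 1 ≠ 0 := sub_ne_zero.2 hz1
  have h3 : (1 + z⁻¹) / (1 - z⁻¹) = - ((1 + z) / (1 - z)) := by
    rw [← neg_div_neg_eq (1 + z), neg_sub]
    field_simp
    ring
  rw [h3]; simp

lemma ee_ne_one {t : ℝ} (ht : t ∈ Set.Ioo (0:ℝ) (2 * Real.pi)) : ee t ≠ 1 := by
  intro h
  rw [ee, Complex.exp_eq_one_iff] at h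
  obtain ⟨n, hn⟩ := h
  have h2 : (t : ℂ) = ((n * (2 * Real.pi) : ℝ) : ℂ) := by
    have := Complex.I_ne_zero
    apply mul_right_cancel₀ this
    rw [hn]; push_cast; ring
  have h3 : t = n * (2 * Real.pi) := by exact_mod_cast h2
  have hp := Real.pi_pos
  obtain ⟨h4, h5⟩ := ht
  rw [h3] at h4 h5
  have h6 : (0:ℝ) < n := by
    by_contra hc; push Not at hc; nlinarith
  have h7 : (n:ℝ) < 1 := by
    by_contra hc; push Not at hc; nlinarith
  have h8 : (0:ℤ) < n := by exact_mod_cast h6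
  have h9 : n < (1:ℤ) := by exact_mod_cast h7
  omega

lemma poly_int (p : Polynomial ℂ) (m : ℕ) :
    ∫ t in (0:ℝ)..(2 * Real.pi), p.eval (ee t) * ee t ^ (m + 1) = 0 := by
  have hc := ee_cont
  simp only [Polynomial.eval_eq_sum_range, Finset.sum_mul]
  rw [intervalIntegral.integral_finsetSum]
  · apply Finset.sum_eq_zero
    intro i _
    simp only [mul_assoc, ← pow_add]
    rw [intervalIntegral.integral_const_mul, ee_int _ (by omega), mul_zero]
  · intro i _
    exact Continuous.intervalIntegrable (by fun_prop) _ _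

lemma orth {N : ℕ} (ha : Summable fun k => ‖coeff k (fs N)‖) (j : ℕ) (hj : N < j) :
    ∑' k, coeff k (fs N) * coeff (k + j) (fs N) = 0 := by
  set a : ℕ → ℂ := fun k => coeff k (fs N) with hadef
  have hinv : Continuous fun t => (ee t)⁻¹ := ee_cont.inv₀ ee_ne
  have hinv1 : ∀ t, ‖(ee t)⁻¹‖ = 1 := fun t => by rw [norm_inv, ee_norm, inv_one]
  set G : ℝ → ℂ := fun t => ∑' k, a k * (ee t)⁻¹ ^ k with hG
  have hGc : Continuous G := by
    have := (series_cont ha).comp_continuous hinv (fun t => by simp [ee_norm])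
    exact this
  have hGb : ∀ t, ‖G t‖ ≤ ∑' k, ‖a k‖ := by
    intro t
    refine tsum_of_norm_bounded ha.hasSum ?_
    intro k
    rw [norm_mul, norm_pow, hinv1, one_pow, mul_one]
  have hI : ∀ m, ∫ t in (0:ℝ)..(2 * Real.pi), G t * ee t ^ m = 2 * Real.pi * a m := by
    intro m
    have h1 := swap_int ha hinv hinv1 (h := fun t => ee t ^ m) (ee_cont.pow m) 1
      (fun t => by rw [norm_pow, ee_norm, one_pow])
    simp only [ee_int2] at h1
    have h2 := hasSum_single (f := fun k => a k * if k = m then (2 * Real.pi : ℂ) else 0) m (by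
      intro k hk; simp [hk])
    have := h1.unique h2
    rw [hG, this]; simp [mul_comm]
  have hJ := swap_int ha ee_cont ee_norm (h := fun t => G t * ee t ^ j) (hGc.mul (ee_cont.pow j))
      (∑' k, ‖a k‖) (fun t => by rw [norm_mul, norm_pow, ee_norm, one_pow, mul_one]; exact hGb t)
  have h0 : (∫ t in (0:ℝ)..(2 * Real.pi), (∑' k, a k * ee t ^ k) * (G t * ee t ^ j)) = 0 := by
    obtain ⟨m, rfl⟩ := Nat.exists_eq_add_of_lt hj
    rw [← poly_int ((1 - Polynomial.X) ^ N * (Polynomial.X - 1) ^ N) m]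
    apply intervalIntegral.integral_congr_Ioo_of_le (by positivity)
    intro t ht
    have h1 := ee_ne_one ht
    have h1' := ee_ne t
    have e1 : ∑' k, a k * ee t ^ k = _ := bdry ha (ee_norm t) h1
    have e2 : G t = _ := bdry ha (hinv1 t) (by simpa using h1)
    have e3 := Sf_mul_inv h1' h1
    simp only []
    rw [e1, e2]
    simp only [Polynomial.eval_mul, Polynomial.eval_pow, Polynomial.eval_sub, Polynomial.eval_one,
      Polynomial.eval_X]
    have e4 : (1 - (ee t)⁻¹) ^ N * ee t ^ N = (ee t - 1) ^ N := by
      rw [← mul_pow]; congr 1; field_simp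
    rw [← e4, add_assoc, pow_add _ N]
    linear_combination ((1 - ee t) ^ N * (1 - (ee t)⁻¹) ^ N * ee t ^ N * ee t ^ (m + 1)) * e3
  rw [h0] at hJ
  have h3 : ∀ k, ∫ t in (0:ℝ)..(2 * Real.pi), ee t ^ k * (G t * ee t ^ j) = 2 * Real.pi * a (k + j) := by
    intro k
    rw [← hI]
    congr 1; ext t; rw [pow_add]; ring
  simp only [h3] at hJ
  have h4 := hJ.mul_left ((2 * Real.pi : ℂ)⁻¹)
  have hpi : (2 * Real.pi : ℂ) ≠ 0 := by
    have := Real.pi_ne_zero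
    simp [this]
  rw [mul_zero] at h4
  rw [← h4.tsum_eq]
  congr 1; ext k
  simp only [hadef]
  field_simp


lemma mulCoeff_eq (a b : ℕ → ℂ) (k : ℕ) :
    mulCoeff a b k = coeff k (PowerSeries.mk a * PowerSeries.mk b) := by
  rw [PowerSeries.coeff_mul, Finset.Nat.sum_antidiagonal_eq_sum_range_succ_mk]
  simp [mulCoeff]

lemma mulCoeff_poly (p : Polynomial ℂ) (ψ : PowerSeries ℂ) (k : ℕ) :
    mulCoeff p.coeff (fun k => coeff k ψ) k = coeff k ((p : PowerSeries ℂ) * ψ) := by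
  rw [mulCoeff_eq]
  congr 2
  ext n
  simp

lemma oneCoeff_eq (k : ℕ) : oneCoeff k = coeff k (1 : PowerSeries ℂ) := by
  rw [PowerSeries.coeff_one, oneCoeff]

lemma sum_sq : Summable fun k : ℕ => 1 / ((k : ℝ) + 1) ^ 2 := by
  have := (summable_nat_add_iff 1).2 (Real.summable_one_div_nat_pow.2 (show 1 < 2 by norm_num))
  simpa using this

lemma wt_le {α : ℝ} {B : ℕ} (h : α ≤ B) (k : ℕ) : ((k : ℝ) + 1) ^ α ≤ ((k : ℝ) + 1) ^ B := by
  rw [← Real.rpow_natCast]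
  exact Real.rpow_le_rpow_of_exponent_le (by linarith [Nat.cast_nonneg (α := ℝ) k]) h

lemma wt_ge {α : ℝ} {B : ℕ} (h : -α ≤ B) (k : ℕ) : 1 ≤ ((k : ℝ) + 1) ^ α * ((k : ℝ) + 1) ^ B := by
  have := wt_le h k
  have h1 : (0:ℝ) < (k : ℝ) + 1 := by positivity
  rw [Real.rpow_neg h1.le] at this
  have h2 : (0:ℝ) < ((k : ℝ) + 1) ^ α := Real.rpow_pos_of_pos h1 _
  calc 1 = ((k : ℝ) + 1) ^ α * (((k : ℝ) + 1) ^ α)⁻¹ := (mul_inv_cancel₀ h2.ne').symm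
    _ ≤ _ := by gcongr

lemma wt_pos (α : ℝ) (k : ℕ) : 0 < ((k : ℝ) + 1) ^ α := Real.rpow_pos_of_pos (by positivity) _

lemma dec_mem {α : ℝ} {B : ℕ} (h : α ≤ B) {ψ : PowerSeries ℂ} (hψ : Dec (B + 2) ψ) :
    MemD α (fun k => coeff k ψ) := by
  obtain ⟨K, hK, hψ⟩ := hψ
  refine Summable.of_nonneg_of_le (fun k => mul_nonneg (by positivity) (wt_pos α k).le) ?_
    (sum_sq.mul_left (K ^ 2))
  intro k
  have h1 : (1:ℝ) ≤ (k : ℝ) + 1 := by linarith [Nat.cast_nonneg (α := ℝ) k]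
  calc ‖coeff k ψ‖ ^ 2 * ((k : ℝ) + 1) ^ α
      ≤ (K / ((k : ℝ) + 1) ^ (B + 2)) ^ 2 * ((k : ℝ) + 1) ^ B := by
        gcongr
        · exact hψ k
        · exact wt_le h k
    _ = K ^ 2 * (1 / ((k : ℝ) + 1) ^ (B + 4)) := by
        have : ((k : ℝ) + 1) ≠ 0 := by positivity
        field_simp; ring
    _ ≤ K ^ 2 * (1 / ((k : ℝ) + 1) ^ 2) := by
        gcongr
        omega

lemma coef_le {α : ℝ} {B : ℕ} (h : -α ≤ B) {a : ℕ → ℂ} (ha : MemD α a) (k : ℕ) :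
    ‖a k‖ ≤ DNorm α a * ((k : ℝ) + 1) ^ B := by
  have hD : 0 ≤ DNorm α a := Real.sqrt_nonneg _
  have h0 : ∀ k : ℕ, 0 ≤ ‖a k‖ ^ 2 * ((k : ℝ) + 1) ^ α := fun k =>
    mul_nonneg (by positivity) (wt_pos α k).le
  have h1 : ‖a k‖ ^ 2 * ((k : ℝ) + 1) ^ α ≤ DNorm α a ^ 2 := by
    rw [DNorm, Real.sq_sqrt (tsum_nonneg h0)]
    exact Summable.le_tsum ha k (fun j _ => h0 j)
  have h2 : (1:ℝ) ≤ ((k : ℝ) + 1) ^ B :=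
    one_le_pow₀ (by linarith [Nat.cast_nonneg (α := ℝ) k])
  refine (sq_le_sq₀ (norm_nonneg _) (by positivity)).1 ?_
  calc ‖a k‖ ^ 2 ≤ ‖a k‖ ^ 2 * (((k : ℝ) + 1) ^ α * ((k : ℝ) + 1) ^ B) :=
        le_mul_of_one_le_right (by positivity) (wt_ge h k)
    _ = (‖a k‖ ^ 2 * ((k : ℝ) + 1) ^ α) * ((k : ℝ) + 1) ^ B := by ring
    _ ≤ DNorm α a ^ 2 * ((k : ℝ) + 1) ^ B := by gcongr
    _ ≤ DNorm α a ^ 2 * (((k : ℝ) + 1) ^ B * ((k : ℝ) + 1) ^ B) := by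
        gcongr; exact le_mul_of_one_le_right (by positivity) h2
    _ = _ := by ring

lemma dec_summable {B : ℕ} {ψ : PowerSeries ℂ} (hψ : Dec (B + 2) ψ) :
    Summable fun k => ‖coeff k ψ‖ := by
  obtain ⟨K, hK, hψ⟩ := hψ
  refine Summable.of_nonneg_of_le (fun k => norm_nonneg _) ?_ (sum_sq.mul_left K)
  intro k
  refine (hψ k).trans ?_
  rw [mul_one_div]
  gcongr
  · linarith [Nat.cast_nonneg (α := ℝ) k]
  · omega

lemma orth_poly {N : ℕ} (ha : Summable fun k => ‖coeff k (fs N)‖) (p : Polynomial ℂ) :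
    ∀ j, N < j →
    HasSum (fun k => coeff k ((p : PowerSeries ℂ) * fs N) * coeff (k + j) (fs N)) 0 := by
  have hbase : ∀ j, N < j → HasSum (fun k => coeff k (fs N) * coeff (k + j) (fs N)) 0 := by
    intro j hj
    rw [← orth ha j hj]
    apply Summable.hasSum
    have h2 := (summable_nat_add_iff j).2 ha
    have h3 : Summable fun k => ‖coeff k (fs N)‖ * ‖coeff (k + j) (fs N)‖ := by
      refine Summable.of_nonneg_of_le (fun k => by positivity) ?_ (ha.mul_right (∑' k, ‖coeff k (fs N)‖))
      intro k
      gcongr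
      exact Summable.le_tsum ha (k + j) (fun _ _ => norm_nonneg _)
    apply Summable.of_norm
    simpa only [norm_mul] using h3
  induction p using Polynomial.induction_on' with
  | add p q hp hq =>
    intro j hj
    have := (hp j hj).add (hq j hj)
    rw [add_zero] at this
    simpa only [Polynomial.coe_add, add_mul, map_add] using this
  | monomial n c =>
    rw [← Polynomial.C_mul_X_pow_eq_monomial]
    simp only [Polynomial.coe_mul, Polynomial.coe_C, Polynomial.coe_pow, Polynomial.coe_X, mul_assoc,
      coeff_C_mul]
    have : ∀ j, N < j → HasSum (fun k => coeff k (X ^ n * fs N) * coeff (k + j) (fs N)) 0 := by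
      induction n with
      | zero => simpa using hbase
      | succ n ih =>
        intro j hj
        have h1 := ih (j + 1) (by omega)
        rw [← hasSum_nat_add_iff' 1]
        simp only [pow_succ', mul_assoc, coeff_succ_X_mul]
        simpa [add_assoc, add_comm 1 j] using h1
    intro j hj
    simpa using (this j hj).mul_left c

lemma not_cyclic {α : ℝ} {B : ℕ} (h : α ≤ B) (h' : -α ≤ B) :
    ¬ Cyclic α (fun k => coeff k (fs (2 * (B + 2)))) := by
  rintro ⟨p, hp⟩
  set N := 2 * (B + 2) with hN
  have hdec : Dec (B + 2) (fs N) := fs_dec (B + 2)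
  have hsum := dec_summable hdec
  have hdec0 := hdec
  obtain ⟨K, hK, hdec⟩ := hdec
  set T := ∑' k : ℕ, 1 / ((k : ℝ) + 1) ^ 2 with hT
  have hdec1 : Dec (B + 2) (1 : PowerSeries ℂ) := by
    refine ⟨1, zero_le_one, fun k => ?_⟩
    rw [PowerSeries.coeff_one]
    split_ifs with hk
    · subst hk; simp
    · simp; positivity
  have key : ∀ n, ‖coeff (N + 1) (fs N)‖ ≤
      DNorm α (fun k => mulCoeff (p n).coeff (fun k => coeff k (fs N)) k - oneCoeff k) * (K * T) := by
    intro n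
    set ψ : PowerSeries ℂ := (p n : PowerSeries ℂ) * fs N + C (-1) * 1 with hψ
    have hfun : (fun k => mulCoeff (p n).coeff (fun k => coeff k (fs N)) k - oneCoeff k) =
        fun k => coeff k ψ := by
      ext k
      rw [mulCoeff_poly, oneCoeff_eq, hψ, map_add, coeff_C_mul]; ring
    rw [hfun]
    have hmem : MemD α (fun k => coeff k ψ) :=
      dec_mem h (dec_add (dec_poly hdec0 _) (dec_C _ hdec1))
    have hD : 0 ≤ DNorm α (fun k => coeff k ψ) := Real.sqrt_nonneg _
    have hs1 := orth_poly hsum (p n) (N + 1) (by omega)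
    have hs2 := hasSum_single (f := fun k => coeff k (C (-1) * 1 : PowerSeries ℂ) * coeff (k + (N + 1)) (fs N)) 0 (by
      intro k hk
      rw [coeff_C_mul, PowerSeries.coeff_one, if_neg hk]; simp)
    have hs := hs1.add hs2
    simp only [← add_mul, ← map_add, ← hψ] at hs
    have hb : ‖∑' k, coeff k ψ * coeff (k + (N + 1)) (fs N)‖ ≤ DNorm α (fun k => coeff k ψ) * (K * T) := by
      refine tsum_of_norm_bounded ((sum_sq.hasSum.mul_left K).mul_left (DNorm α (fun k => coeff k ψ))) ?_
      intro k
      rw [norm_mul]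
      have e1 := coef_le h' hmem k
      have e2 : ‖coeff (k + (N + 1)) (fs N)‖ ≤ K / ((k : ℝ) + 1) ^ (B + 2) := by
        refine (hdec _).trans ?_
        gcongr
        linarith
      calc _ ≤ (DNorm α (fun k => coeff k ψ) * ((k : ℝ) + 1) ^ B) * (K / ((k : ℝ) + 1) ^ (B + 2)) := by
            gcongr
        _ = _ := by
            have : ((k : ℝ) + 1) ≠ 0 := by positivity
            field_simp
            ring
    rw [hs.tsum_eq] at hb
    simpa [coeff_C_mul] using hb
  have hl := hp.mul_const (K * T)
  rw [zero_mul] at hl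
  have := ge_of_tendsto' hl key
  exact fs_ne N (norm_le_zero_iff.1 this)

lemma dil_cyclic (α : ℝ) (N : ℕ) (K : ℝ) (hK : ∀ k, ‖coeff k (fs N)‖ ≤ K) (ρ : ℝ) (h0 : 0 < ρ)
    (h1 : ρ < 1) : Cyclic α (fun k => coeff k (fs N) * ((ρ : ℂ) ^ 2) ^ k) := by
  have hnz : ∀ z : ℂ, ‖z‖ < 1 → (1 - z) ^ N * Sf z ≠ 0 := fun z hz =>
    mul_ne_zero (pow_ne_zero _ (one_sub_ne hz)) (Complex.exp_ne_zero _)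
  have hd : DifferentiableOn ℂ (fun z => ((1 - z) ^ N * Sf z)⁻¹) (Metric.ball 0 1) := by
    apply DifferentiableOn.fun_inv
    · exact DifferentiableOn.mul (by fun_prop) Sf_diff
    · intro z hz; exact hnz z (by simpa using hz)
  set χ := tay (fun z => ((1 - z) ^ N * Sf z)⁻¹) with hχ
  have hs := hs_tay hd
  rw [← hχ] at hs
  have hone : χ * fs N = 1 := by
    refine hs_uniq (hs_congr (hs_mul hs (fs_hs N)) (G := fun _ => 1) ?_) (by simpa using hs_C 1)
    intro z hz
    exact inv_mul_cancel₀ (hnz z hz)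
  have hρ : ‖(ρ : ℂ)‖ = ρ := by rw [Complex.norm_real, Real.norm_eq_abs, abs_of_pos h0]
  obtain ⟨M, hM⟩ : ∃ M, ∀ k, ‖coeff k χ * (ρ : ℂ) ^ k‖ ≤ M := by
    have := (hs ρ (by rw [hρ]; exact h1)).summable.norm.tendsto_atTop_zero.bddAbove_range
    obtain ⟨M, hM⟩ := this
    exact ⟨M, fun k => hM ⟨k, rfl⟩⟩
  have hM0 : 0 ≤ M := (norm_nonneg _).trans (hM 0)
  have hK0 : 0 ≤ K := (norm_nonneg _).trans (hK 0)
  set r : ℂ := (ρ : ℂ) ^ 2 with hr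
  let p : ℕ → Polynomial ℂ := fun m => ∑ i ∈ Finset.range (m + 1), Polynomial.monomial i (coeff i χ * r ^ i)
  have hpc : ∀ m i, (p m).coeff i = if i ≤ m then coeff i χ * r ^ i else 0 := by
    intro m i
    simp only [p, Polynomial.finsetSum_coeff, Polynomial.coeff_monomial]
    rw [Finset.sum_ite_eq']
    simp [Nat.lt_succ_iff]
  refine ⟨p, ?_⟩
  have hzero : ∀ m k, k ≤ m →
      mulCoeff (p m).coeff (fun k => coeff k (fs N) * r ^ k) k - oneCoeff k = 0 := by
    intro m k hk
    have h2 := congrArg (coeff k) hone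
    rw [PowerSeries.coeff_mul, Finset.Nat.sum_antidiagonal_eq_sum_range_succ_mk, ← oneCoeff_eq] at h2
    have h3 : mulCoeff (p m).coeff (fun k => coeff k (fs N) * r ^ k) k = oneCoeff k * r ^ k := by
      rw [← h2, mulCoeff, Finset.sum_mul]
      refine Finset.sum_congr rfl fun i hi => ?_
      have hi' : i ≤ k := by simpa [Nat.lt_succ_iff] using hi
      rw [hpc, if_pos (by omega)]
      have : r ^ k = r ^ i * r ^ (k - i) := by rw [← pow_add]; congr 1; omega
      rw [this]; ring
    rw [h3, oneCoeff]
    split_ifs with hk0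
    · subst hk0; simp
    · simp
  have hbound : ∀ m k, ‖mulCoeff (p m).coeff (fun k => coeff k (fs N) * r ^ k) k - oneCoeff k‖ ≤
      M * K * ((k : ℝ) + 1) * ρ ^ k := by
    intro m k
    by_cases hk : k ≤ m
    · rw [hzero m k hk, norm_zero]; positivity
    · have : oneCoeff k = 0 := by rw [oneCoeff, if_neg (by omega)]
      rw [this, sub_zero, mulCoeff]
      have : ∀ i ∈ Finset.range (k + 1), ‖(p m).coeff i * (coeff (k - i) (fs N) * r ^ (k - i))‖ ≤
          M * K * ρ ^ k := by
        intro i hi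
        have hi' : i ≤ k := by simpa [Nat.lt_succ_iff] using hi
        rw [hpc]
        split_ifs with him
        · have hrn : ‖r‖ = ρ ^ 2 := by rw [hr, norm_pow, hρ]
          have e1 : ‖coeff i χ‖ * ρ ^ i ≤ M := by
            have := hM i
            rwa [norm_mul, norm_pow, hρ] at this
          have e2 : (ρ ^ 2) ^ (k - i) ≤ ρ ^ (k - i) := by
            apply pow_le_pow_left₀ (by positivity); nlinarith
          calc ‖coeff i χ * r ^ i * (coeff (k - i) (fs N) * r ^ (k - i))‖
              = (‖coeff i χ‖ * ρ ^ i) * ρ ^ i * (‖coeff (k - i) (fs N)‖ * (ρ ^ 2) ^ (k - i)) := by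
                simp only [norm_mul, norm_pow, hrn]; ring
            _ ≤ M * ρ ^ i * (K * ρ ^ (k - i)) := by
                gcongr
                exact hK _
            _ = M * K * (ρ ^ i * ρ ^ (k - i)) := by ring
            _ = M * K * ρ ^ k := by rw [← pow_add]; congr 2; omega
        · simp; positivity
      refine (norm_sum_le_of_le _ this).trans (le_of_eq ?_)
      simp; ring
  obtain ⟨B, hB⟩ := exists_nat_ge α
  have hsb : Summable fun k : ℕ => (M * K) ^ 2 * (((k : ℝ) + 1) ^ (B + 2) * (ρ ^ 2) ^ k) := by
    apply Summable.mul_left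
    have := summable_pow_mul_geometric_of_norm_lt_one (R := ℝ) (B + 2) (r := ρ ^ 2) (by
      rw [Real.norm_eq_abs, abs_of_pos (by positivity)]; nlinarith)
    have := ((summable_nat_add_iff 1).2 this).mul_right (ρ ^ 2)⁻¹
    refine this.congr fun k => ?_
    have : ρ ≠ 0 := h0.ne'
    push_cast
    field_simp
    ring
  have ht := tendsto_tsum_of_dominated_convergence (𝓕 := atTop)
    (f := fun m k => ‖mulCoeff (p m).coeff (fun k => coeff k (fs N) * r ^ k) k - oneCoeff k‖ ^ 2 *
      ((k : ℝ) + 1) ^ α) (g := fun _ => 0) hsb ?_ ?_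
  · have h2 := (Real.continuous_sqrt.tendsto _).comp ht
    simpa [DNorm, Function.comp_def] using h2
  · intro k
    refine tendsto_const_nhds.congr' ?_
    filter_upwards [eventually_ge_atTop k] with m hm
    rw [hzero m k hm]; simp
  · refine Eventually.of_forall fun m k => ?_
    rw [Real.norm_eq_abs, abs_of_nonneg (mul_nonneg (by positivity) (wt_pos α k).le)]
    calc _ ≤ (M * K * ((k : ℝ) + 1) * ρ ^ k) ^ 2 * ((k : ℝ) + 1) ^ B := by
          gcongr
          · exact hbound m k
          · exact wt_le hB k
      _ = _ := by ring

end CycAux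

/-- For every `α ∈ ℝ` there are cyclic functions `f_n ∈ D_α` converging in `D_α` to a
function `f` which has no zeros in the open unit disc and yet is not cyclic for `D_α`. -/
theorem cyclicity_not_preserved (α : ℝ) :
    ∃ f : ℕ → ℂ, ∃ fn : ℕ → ℕ → ℂ,
      MemD α f ∧ (∀ n, MemD α (fn n)) ∧ (∀ n, Cyclic α (fn n)) ∧
      Tendsto (fun n => DNorm α (fun k => fn n k - f k)) atTop (𝓝 0) ∧
      (∀ w : ℂ, ‖w‖ < 1 → (∑' k : ℕ, f k * w ^ k) ≠ 0) ∧
      ¬ Cyclic α f := by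
  obtain ⟨B, hB⟩ := exists_nat_ge |α|
  have hB1 : α ≤ B := (le_abs_self α).trans hB
  have hB2 : -α ≤ B := (neg_le_abs α).trans hB
  set N := 2 * (B + 2) with hN
  have hdec : CycAux.Dec (B + 2) (CycAux.fs N) := CycAux.fs_dec (B + 2)
  have hsum := CycAux.dec_summable hdec
  have hmem := CycAux.dec_mem hB1 hdec
  set a : ℕ → ℂ := fun k => PowerSeries.coeff k (CycAux.fs N) with ha
  let ρ : ℕ → ℝ := fun n => 1 - 1 / ((n : ℝ) + 2)
  have hρ0 : ∀ n, 0 < ρ n := by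
    intro n
    have : (1:ℝ) / ((n : ℝ) + 2) < 1 := by
      rw [div_lt_one (by positivity)]; linarith [Nat.cast_nonneg (α := ℝ) n]
    simp only [ρ]; linarith
  have hρ1 : ∀ n, ρ n < 1 := by
    intro n
    have : (0:ℝ) < 1 / ((n : ℝ) + 2) := by positivity
    simp only [ρ]; linarith
  have hρt : Tendsto ρ atTop (𝓝 1) := by
    have h1 : Tendsto (fun n : ℕ => (1:ℝ) / ((n : ℝ) + 2)) atTop (𝓝 0) := by
      have := (tendsto_add_atTop_iff_nat 2).2 (tendsto_one_div_atTop_nhds_zero_nat (𝕜 := ℝ))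
      simpa using this
    simpa [ρ] using h1.const_sub 1
  have hq : ∀ n k, (((ρ n : ℂ) ^ 2) ^ k) = (((ρ n ^ 2) ^ k : ℝ) : ℂ) := by
    intro n k; push_cast; rfl
  have hq0 : ∀ n k, 0 ≤ (ρ n ^ 2) ^ k := fun n k => by positivity
  have hq1 : ∀ n k, (ρ n ^ 2) ^ k ≤ 1 := fun n k =>
    pow_le_one₀ (by positivity) (pow_le_one₀ (hρ0 n).le (hρ1 n).le)
  refine ⟨a, fun n k => a k * ((ρ n : ℂ) ^ 2) ^ k, hmem, ?_, ?_, ?_, ?_, CycAux.not_cyclic hB1 hB2⟩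
  · intro n
    refine Summable.of_nonneg_of_le (fun k => mul_nonneg (by positivity) (CycAux.wt_pos α k).le) ?_ hmem
    intro k
    have := CycAux.wt_pos α k
    gcongr
    rw [norm_mul, hq, Complex.norm_real, Real.norm_eq_abs, abs_of_nonneg (hq0 n k)]
    exact mul_le_of_le_one_right (norm_nonneg _) (hq1 n k)
  · intro n
    exact CycAux.dil_cyclic α N (∑' k, ‖a k‖)
      (fun k => Summable.le_tsum hsum k (fun _ _ => norm_nonneg _)) (ρ n) (hρ0 n) (hρ1 n)
  · have ht := tendsto_tsum_of_dominated_convergence (𝓕 := atTop)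
      (f := fun n k => ‖a k * ((ρ n : ℂ) ^ 2) ^ k - a k‖ ^ 2 * ((k : ℝ) + 1) ^ α)
      (g := fun _ => 0) hmem ?_ ?_
    · have h2 := (Real.continuous_sqrt.tendsto _).comp ht
      simpa [DNorm, Function.comp_def] using h2
    · intro k
      have hc : Continuous fun x : ℝ => ‖a k * ((x : ℂ) ^ 2) ^ k - a k‖ ^ 2 * ((k : ℝ) + 1) ^ α := by
        fun_prop
      have := (hc.tendsto 1).comp hρt
      simpa [Function.comp_def] using this
    · refine Eventually.of_forall fun n k => ?_
      have hw := CycAux.wt_pos α k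
      rw [Real.norm_eq_abs, abs_of_nonneg (mul_nonneg (by positivity) hw.le)]
      gcongr
      have : a k * ((ρ n : ℂ) ^ 2) ^ k - a k = a k * (((ρ n ^ 2) ^ k - 1 : ℝ) : ℂ) := by
        rw [hq]; push_cast; ring
      rw [this, norm_mul, Complex.norm_real, Real.norm_eq_abs]
      refine mul_le_of_le_one_right (norm_nonneg _) ?_
      rw [abs_le]
      constructor <;> linarith [hq0 n k, hq1 n k]
  · intro w hw
    rw [(CycAux.fs_hs N w hw).tsum_eq]
    exact mul_ne_zero (pow_ne_zero _ (CycAux.one_sub_ne hw)) (Complex.exp_ne_zero _)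
end
end

section
/- Let α > 1 and let {f_n} be a sequence of functions in D_α, none of which is cyclic for D_α, converging in the norm of D_α to a function f ∈ D_α. Then f is not cyclic for D_α. -/
open Filter Topology

noncomputable section

/-- The weighted square-sum of a power series. -/
def NN (α : ℝ) (F : PowerSeries ℂ) : ℝ :=
  ∑' k : ℕ, ‖PowerSeries.coeff k F‖ ^ 2 * ((k : ℝ) + 1) ^ α

/-- Membership for power series. -/
def MM (α : ℝ) (F : PowerSeries ℂ) : Prop :=
  Summable (fun k : ℕ => ‖PowerSeries.coeff k F‖ ^ 2 * ((k : ℝ) + 1) ^ α)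

lemma ww_pos (α : ℝ) (k : ℕ) : 0 < ((k : ℝ) + 1) ^ α := by positivity

lemma NN_nonneg (α : ℝ) (F : PowerSeries ℂ) : 0 ≤ NN α F :=
  tsum_nonneg fun k => by positivity

lemma add_term (α : ℝ) (F G : PowerSeries ℂ) (k : ℕ) :
    ‖PowerSeries.coeff k (F + G)‖ ^ 2 * ((k : ℝ) + 1) ^ α ≤
      2 * (‖PowerSeries.coeff k F‖ ^ 2 * ((k : ℝ) + 1) ^ α) +
      2 * (‖PowerSeries.coeff k G‖ ^ 2 * ((k : ℝ) + 1) ^ α) := by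
  have h1 : ‖PowerSeries.coeff k (F + G)‖ ≤ ‖PowerSeries.coeff k F‖ + ‖PowerSeries.coeff k G‖ := by
    rw [map_add]; exact norm_add_le _ _
  have h2 : ‖PowerSeries.coeff k (F + G)‖ ^ 2 ≤
      2 * ‖PowerSeries.coeff k F‖ ^ 2 + 2 * ‖PowerSeries.coeff k G‖ ^ 2 := by
    have := pow_le_pow_left₀ (norm_nonneg _) h1 2
    nlinarith [sq_nonneg (‖PowerSeries.coeff k F‖ - ‖PowerSeries.coeff k G‖)]
  nlinarith [mul_le_mul_of_nonneg_right h2 (ww_pos α k).le]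

lemma MM_add {α : ℝ} {F G : PowerSeries ℂ} (hF : MM α F) (hG : MM α G) : MM α (F + G) :=
  Summable.of_nonneg_of_le (fun k => by positivity) (add_term α F G)
    ((hF.mul_left 2).add (hG.mul_left 2))

lemma NN_add {α : ℝ} {F G : PowerSeries ℂ} (hF : MM α F) (hG : MM α G) :
    NN α (F + G) ≤ 2 * NN α F + 2 * NN α G := by
  have h1 := Summable.mul_left 2 hF
  have h2 := Summable.mul_left 2 hG
  calc NN α (F + G) ≤ _ := (MM_add hF hG).tsum_le_tsum (add_term α F G) (h1.add h2)
    _ = _ := by rw [h1.tsum_add h2, tsum_mul_left, tsum_mul_left]; rfl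

lemma MM_neg {α : ℝ} {F : PowerSeries ℂ} (hF : MM α F) : MM α (-F) := by
  simpa [MM] using hF

lemma NN_neg (α : ℝ) (F : PowerSeries ℂ) : NN α (-F) = NN α F := by
  simp [NN]

lemma MM_sub {α : ℝ} {F G : PowerSeries ℂ} (hF : MM α F) (hG : MM α G) : MM α (F - G) := by
  rw [sub_eq_add_neg]; exact MM_add hF (MM_neg hG)

lemma MM_poly (α : ℝ) (p : Polynomial ℂ) : MM α (p : PowerSeries ℂ) := by
  apply summable_of_ne_finset_zero (s := p.support)
  intro k hk
  simp [Polynomial.notMem_support_iff.mp hk]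

lemma MM_one (α : ℝ) : MM α 1 := by
  simpa using MM_poly α 1

/-- the constant -/
def KK (α : ℝ) : ℝ := 2 ^ α * (2 * ∑' k : ℕ, (((k : ℝ) + 1) ^ α)⁻¹)

lemma ww_summable {α : ℝ} (hα : 1 < α) : Summable (fun k : ℕ => (((k : ℝ) + 1) ^ α)⁻¹) := by
  have := (summable_nat_add_iff 1).mpr (Real.summable_nat_rpow_inv.mpr hα)
  simpa using this

lemma KK_nonneg (α : ℝ) : 0 ≤ KK α := by
  unfold KK
  have : 0 ≤ ∑' k : ℕ, (((k : ℝ) + 1) ^ α)⁻¹ := tsum_nonneg fun k => by positivity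
  positivity

lemma KK_bound {α : ℝ} (hα : 1 < α) (n : ℕ) :
    ((n : ℝ) + 1) ^ α * ∑ x ∈ Finset.HasAntidiagonal.antidiagonal n,
      (((x.1 : ℝ) + 1) ^ α)⁻¹ * (((x.2 : ℝ) + 1) ^ α)⁻¹ ≤ KK α := by
  have hs := ww_summable hα
  have hr : ∑ k ∈ Finset.range (n + 1), (((k : ℝ) + 1) ^ α)⁻¹ ≤
      ∑' k : ℕ, (((k : ℝ) + 1) ^ α)⁻¹ := hs.sum_le_tsum _ (fun k _ => by positivity)
  have e1 : ∑ x ∈ Finset.HasAntidiagonal.antidiagonal n, (((x.1 : ℝ) + 1) ^ α)⁻¹ =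
      ∑ k ∈ Finset.range (n + 1), (((k : ℝ) + 1) ^ α)⁻¹ :=
    Finset.Nat.sum_antidiagonal_eq_sum_range_succ (fun i _ => (((i : ℝ) + 1) ^ α)⁻¹) n
  have e2 : ∑ x ∈ Finset.HasAntidiagonal.antidiagonal n, (((x.2 : ℝ) + 1) ^ α)⁻¹ =
      ∑ k ∈ Finset.range (n + 1), (((k : ℝ) + 1) ^ α)⁻¹ := by
    rw [← e1]
    exact Finset.Nat.sum_antidiagonal_swap (f := fun x : ℕ × ℕ => (((x.1 : ℝ) + 1) ^ α)⁻¹)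
  have key : ∀ x ∈ Finset.HasAntidiagonal.antidiagonal n,
      ((n : ℝ) + 1) ^ α * ((((x.1 : ℝ) + 1) ^ α)⁻¹ * (((x.2 : ℝ) + 1) ^ α)⁻¹) ≤
      2 ^ α * ((((x.1 : ℝ) + 1) ^ α)⁻¹ + (((x.2 : ℝ) + 1) ^ α)⁻¹) := by
    rintro ⟨i, j⟩ hx
    have hij : i + j = n := by simpa using hx
    have hi := ww_pos α i
    have hj := ww_pos α j
    have hn : ((n : ℝ) + 1) ^ α ≤ 2 ^ α * (((i : ℝ) + 1) ^ α + ((j : ℝ) + 1) ^ α) := by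
      have h2 : (0 : ℝ) < 2 ^ α := by positivity
      have hij' : (i : ℝ) + j = n := by exact_mod_cast hij
      rcases le_total i j with h | h
      · have h' : (i : ℝ) ≤ j := by exact_mod_cast h
        have : ((n : ℝ) + 1) ^ α ≤ (2 * ((j : ℝ) + 1)) ^ α :=
          Real.rpow_le_rpow (by positivity) (by linarith) (by linarith)
        rw [Real.mul_rpow (by norm_num) (by positivity)] at this
        nlinarith
      · have h' : (j : ℝ) ≤ i := by exact_mod_cast h
        have : ((n : ℝ) + 1) ^ α ≤ (2 * ((i : ℝ) + 1)) ^ α :=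
          Real.rpow_le_rpow (by positivity) (by linarith) (by linarith)
        rw [Real.mul_rpow (by norm_num) (by positivity)] at this
        nlinarith
    calc _ ≤ (2 ^ α * (((i : ℝ) + 1) ^ α + ((j : ℝ) + 1) ^ α)) *
          ((((i : ℝ) + 1) ^ α)⁻¹ * (((j : ℝ) + 1) ^ α)⁻¹) :=
          mul_le_mul_of_nonneg_right hn (by positivity)
      _ = _ := by
        generalize ((i : ℝ) + 1) ^ α = u at *
        generalize ((j : ℝ) + 1) ^ α = v at *
        field_simp
        ring
  rw [Finset.mul_sum]
  refine (Finset.sum_le_sum key).trans ?_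
  rw [← Finset.mul_sum, Finset.sum_add_distrib, e1, e2]
  unfold KK
  have : (0 : ℝ) ≤ 2 ^ α := by positivity
  exact mul_le_mul_of_nonneg_left (by linarith) this

lemma mul_term {α : ℝ} (hα : 1 < α) (F G : PowerSeries ℂ) (n : ℕ) :
    ‖PowerSeries.coeff n (F * G)‖ ^ 2 * ((n : ℝ) + 1) ^ α ≤
      KK α * ∑ x ∈ Finset.HasAntidiagonal.antidiagonal n,
        (‖PowerSeries.coeff x.1 F‖ ^ 2 * ((x.1 : ℝ) + 1) ^ α) *
        (‖PowerSeries.coeff x.2 G‖ ^ 2 * ((x.2 : ℝ) + 1) ^ α) := by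
  have h1 : ‖PowerSeries.coeff n (F * G)‖ ≤ ∑ x ∈ Finset.HasAntidiagonal.antidiagonal n,
      ‖PowerSeries.coeff x.1 F‖ * ‖PowerSeries.coeff x.2 G‖ := by
    rw [PowerSeries.coeff_mul]
    refine (norm_sum_le _ _).trans (le_of_eq ?_)
    simp
  have h2 : (∑ x ∈ Finset.HasAntidiagonal.antidiagonal n,
      ‖PowerSeries.coeff x.1 F‖ * ‖PowerSeries.coeff x.2 G‖) ^ 2 ≤
      (∑ x ∈ Finset.HasAntidiagonal.antidiagonal n,
        (‖PowerSeries.coeff x.1 F‖ ^ 2 * ((x.1 : ℝ) + 1) ^ α) *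
        (‖PowerSeries.coeff x.2 G‖ ^ 2 * ((x.2 : ℝ) + 1) ^ α)) *
      ∑ x ∈ Finset.HasAntidiagonal.antidiagonal n, (((x.1 : ℝ) + 1) ^ α)⁻¹ * (((x.2 : ℝ) + 1) ^ α)⁻¹ := by
    apply Finset.sum_sq_le_sum_mul_sum_of_sq_eq_mul
    · intro x _; positivity
    · intro x _; positivity
    · intro x _
      have hi := ww_pos α x.1
      have hj := ww_pos α x.2
      generalize ((x.1 : ℝ) + 1) ^ α = u at *
      generalize ((x.2 : ℝ) + 1) ^ α = v at *
      field_simp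
  have h3 := KK_bound hα n
  have h0 := pow_le_pow_left₀ (norm_nonneg _) h1 2
  set S := ∑ x ∈ Finset.HasAntidiagonal.antidiagonal n,
        (‖PowerSeries.coeff x.1 F‖ ^ 2 * ((x.1 : ℝ) + 1) ^ α) *
        (‖PowerSeries.coeff x.2 G‖ ^ 2 * ((x.2 : ℝ) + 1) ^ α) with hS
  have hSn : 0 ≤ S := Finset.sum_nonneg fun x _ => by positivity
  calc _ ≤ (S * ∑ x ∈ Finset.HasAntidiagonal.antidiagonal n,
        (((x.1 : ℝ) + 1) ^ α)⁻¹ * (((x.2 : ℝ) + 1) ^ α)⁻¹) * ((n : ℝ) + 1) ^ α :=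
        mul_le_mul_of_nonneg_right (h0.trans h2) (ww_pos α n).le
    _ = S * (((n : ℝ) + 1) ^ α * ∑ x ∈ Finset.HasAntidiagonal.antidiagonal n,
        (((x.1 : ℝ) + 1) ^ α)⁻¹ * (((x.2 : ℝ) + 1) ^ α)⁻¹) := by ring
    _ ≤ S * KK α := mul_le_mul_of_nonneg_left h3 hSn
    _ = _ := mul_comm _ _

lemma conv_summable {α : ℝ} {F G : PowerSeries ℂ} (hF : MM α F) (hG : MM α G) :
    Summable (fun n : ℕ => ∑ x ∈ Finset.HasAntidiagonal.antidiagonal n,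
        (‖PowerSeries.coeff x.1 F‖ ^ 2 * ((x.1 : ℝ) + 1) ^ α) *
        (‖PowerSeries.coeff x.2 G‖ ^ 2 * ((x.2 : ℝ) + 1) ^ α)) :=
  by
  have h := Summable.mul_of_nonneg hF hG (fun k => by positivity) (fun k => by positivity)
  exact summable_sum_mul_antidiagonal_of_summable_mul
    (f := fun k : ℕ => ‖PowerSeries.coeff k F‖ ^ 2 * ((k : ℝ) + 1) ^ α)
    (g := fun k : ℕ => ‖PowerSeries.coeff k G‖ ^ 2 * ((k : ℝ) + 1) ^ α) h

lemma MM_mul {α : ℝ} (hα : 1 < α) {F G : PowerSeries ℂ} (hF : MM α F) (hG : MM α G) :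
    MM α (F * G) :=
  Summable.of_nonneg_of_le (fun k => by positivity) (mul_term hα F G)
    ((conv_summable hF hG).mul_left _)

lemma NN_mul {α : ℝ} (hα : 1 < α) {F G : PowerSeries ℂ} (hF : MM α F) (hG : MM α G) :
    NN α (F * G) ≤ KK α * (NN α F * NN α G) := by
  calc NN α (F * G) ≤ _ := (MM_mul hα hF hG).tsum_le_tsum (mul_term hα F G)
        ((conv_summable hF hG).mul_left _)
    _ = _ := by
      rw [tsum_mul_left]
      congr 1
      exact (Summable.tsum_mul_tsum_eq_tsum_sum_antidiagonal hF hG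
        (Summable.mul_of_nonneg hF hG (fun k => by positivity) (fun k => by positivity))).symm

lemma MM_pow {α : ℝ} (hα : 1 < α) {F : PowerSeries ℂ} (hF : MM α F) (n : ℕ) :
    MM α (F ^ n) := by
  induction n with
  | zero => simpa using MM_one α
  | succ n ih => rw [pow_succ]; exact MM_mul hα ih hF

lemma NN_pow {α : ℝ} (hα : 1 < α) {F : PowerSeries ℂ} (hF : MM α F) (n : ℕ) :
    NN α (F ^ n) ≤ (KK α * NN α F) ^ n * NN α 1 := by
  induction n with
  | zero => simp
  | succ n ih =>
    rw [pow_succ]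
    refine (NN_mul hα (MM_pow hα hF n) hF).trans ?_
    have h1 := KK_nonneg α
    have h2 := NN_nonneg α F
    calc KK α * (NN α (F ^ n) * NN α F) = (KK α * NN α F) * NN α (F ^ n) := by ring
      _ ≤ (KK α * NN α F) * ((KK α * NN α F) ^ n * NN α 1) :=
        mul_le_mul_of_nonneg_left ih (mul_nonneg h1 h2)
      _ = _ := by ring

lemma MM_geom {α : ℝ} (hα : 1 < α) {F : PowerSeries ℂ} (hF : MM α F) (n : ℕ) :
    MM α (∑ i ∈ Finset.range n, F ^ i) := by
  induction n with
  | zero => simpa using MM_poly α 0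
  | succ n ih => rw [Finset.sum_range_succ]; exact MM_add ih (MM_pow hα hF n)

/-- Truncations converge. -/
lemma exists_trunc {α : ℝ} {F : PowerSeries ℂ} (hF : MM α F) {ε : ℝ} (hε : 0 < ε) :
    ∃ q : Polynomial ℂ, NN α ((q : PowerSeries ℂ) - F) < ε := by
  have h := tendsto_sum_nat_add
    (fun k : ℕ => ‖PowerSeries.coeff k F‖ ^ 2 * ((k : ℝ) + 1) ^ α)
  obtain ⟨m, hm⟩ := (h.eventually (gt_mem_nhds hε)).exists
  refine ⟨PowerSeries.trunc m F, ?_⟩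
  have hs : MM α ((PowerSeries.trunc m F : PowerSeries ℂ) - F) := MM_sub (MM_poly _ _) hF
  have e := hs.sum_add_tsum_nat_add m
  have z : ∑ k ∈ Finset.range m, ‖PowerSeries.coeff k
      ((PowerSeries.trunc m F : PowerSeries ℂ) - F)‖ ^ 2 * ((k : ℝ) + 1) ^ α = 0 := by
    apply Finset.sum_eq_zero
    intro k hk
    simp [PowerSeries.coeff_trunc, Finset.mem_range.mp hk]
  rw [z, zero_add] at e
  unfold NN
  rw [← e]
  refine lt_of_eq_of_lt (tsum_congr fun k => ?_) hm
  simp [PowerSeries.coeff_trunc]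

lemma DNorm_eq (α : ℝ) (p : Polynomial ℂ) (f : ℕ → ℂ) :
    DNorm α (fun k => mulCoeff p.coeff f k - oneCoeff k) =
      Real.sqrt (NN α ((p : PowerSeries ℂ) * PowerSeries.mk f - 1)) := by
  unfold DNorm NN
  congr 2
  ext k
  have : mulCoeff p.coeff f k - oneCoeff k =
      PowerSeries.coeff k ((p : PowerSeries ℂ) * PowerSeries.mk f - 1) := by
    rw [map_sub, PowerSeries.coeff_mul, PowerSeries.coeff_one,
      Finset.Nat.sum_antidiagonal_eq_sum_range_succ_mk]
    simp [mulCoeff, oneCoeff]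
  beta_reduce
  rw [this]

lemma cyclic_iff (α : ℝ) (f : ℕ → ℂ) : Cyclic α f ↔ ∀ ε > 0, ∃ p : Polynomial ℂ,
    NN α ((p : PowerSeries ℂ) * PowerSeries.mk f - 1) < ε := by
  unfold Cyclic
  simp_rw [DNorm_eq]
  constructor
  · rintro ⟨p, hp⟩ ε hε
    obtain ⟨n, hn⟩ := (hp.eventually (gt_mem_nhds (Real.sqrt_pos.mpr hε))).exists
    exact ⟨p n, (Real.sqrt_lt_sqrt_iff (NN_nonneg _ _)).mp hn⟩
  · intro h
    choose p hp using fun n : ℕ => h (1 / ((n : ℝ) + 1)) (by positivity)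
    refine ⟨p, ?_⟩
    have : Tendsto (fun n => NN α ((p n : PowerSeries ℂ) * PowerSeries.mk f - 1)) atTop (𝓝 0) :=
      squeeze_zero (fun n => NN_nonneg _ _) (fun n => (hp n).le)
        tendsto_one_div_add_atTop_nhds_zero_nat
    simpa using this.sqrt

/-- If some polynomial multiple is close to `1`, the function is cyclic. -/
lemma cyclic_of_close {α : ℝ} (hα : 1 < α) {f : ℕ → ℂ} (hf : MM α (PowerSeries.mk f))
    (p : Polynomial ℂ)
    (hp : KK α * NN α ((p : PowerSeries ℂ) * PowerSeries.mk f - 1) < 1) : Cyclic α f := by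
  rw [cyclic_iff]
  intro ε hε
  set P : PowerSeries ℂ := (p : PowerSeries ℂ) * PowerSeries.mk f with hP
  have hPM : MM α P := MM_mul hα (MM_poly _ _) hf
  set H : PowerSeries ℂ := 1 - P with hH
  have hHM : MM α H := MM_sub (MM_one α) hPM
  have hHN : KK α * NN α H < 1 := by
    rw [← NN_neg, hH, neg_sub]; exact hp
  have hlim : Tendsto (fun n : ℕ => (KK α * NN α H) ^ n * NN α 1) atTop (𝓝 0) := by
    simpa using (tendsto_pow_atTop_nhds_zero_of_lt_one
      (mul_nonneg (KK_nonneg α) (NN_nonneg α H)) hHN).mul_const (NN α 1)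
  obtain ⟨n, hn⟩ := (hlim.eventually (gt_mem_nhds (show 0 < ε / 4 by positivity))).exists
  set U := ∑ i ∈ Finset.range n, H ^ i with hU
  have hUM : MM α U := MM_geom hα hHM n
  have hPU : P * U = 1 - H ^ n := by
    have := mul_neg_geom_sum H n
    rwa [show 1 - H = P by rw [hH]; ring] at this
  have hc : 0 ≤ KK α * NN α P := mul_nonneg (KK_nonneg α) (NN_nonneg α P)
  obtain ⟨q, hq⟩ := exists_trunc hUM
    (show 0 < ε / (4 * (KK α * NN α P + 1)) by positivity)
  refine ⟨p * q, ?_⟩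
  have e : ((p * q : Polynomial ℂ) : PowerSeries ℂ) * PowerSeries.mk f - 1 =
      P * ((q : PowerSeries ℂ) - U) + -(H ^ n) := by
    rw [mul_sub, hPU, hP, Polynomial.coe_mul]; ring
  have hqM : MM α ((q : PowerSeries ℂ) - U) := MM_sub (MM_poly _ _) hUM
  rw [e]
  have a1 := NN_add (MM_mul hα hPM hqM) (MM_neg (MM_pow hα hHM n))
  have a2 := NN_mul hα hPM hqM
  have a3 := NN_pow hα hHM n
  rw [NN_neg] at a1
  rw [lt_div_iff₀ (by positivity)] at hq
  nlinarith [NN_nonneg α ((q : PowerSeries ℂ) - U)]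

/-- For `α > 1`, the limit in `D_α` of a sequence of non-cyclic functions is not cyclic. -/
theorem noncyclic_limit_of_noncyclic (α : ℝ) (hα : 1 < α)
    (f : ℕ → ℂ) (fn : ℕ → ℕ → ℂ)
    (hf : MemD α f) (hfn : ∀ n, MemD α (fn n))
    (hnc : ∀ n, ¬ Cyclic α (fn n))
    (hconv : Tendsto (fun n => DNorm α (fun k => fn n k - f k)) atTop (𝓝 0)) :
    ¬ Cyclic α f := by
  intro hcyc
  have hF : MM α (PowerSeries.mk f) := by simpa [MM, MemD] using hf
  have hFn : ∀ n, MM α (PowerSeries.mk (fn n)) := fun n => by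
    simpa [MM, MemD] using hfn n
  have hlim : Tendsto (fun n => NN α (PowerSeries.mk (fn n) - PowerSeries.mk f)) atTop (𝓝 0) := by
    have h := hconv.pow 2
    refine Tendsto.congr (fun n => ?_) (by simpa using h)
    have := Real.sq_sqrt (NN_nonneg α (PowerSeries.mk (fn n) - PowerSeries.mk f))
    rw [← this]
    simp [DNorm, NN]
  have hK := KK_nonneg α
  obtain ⟨p, hp⟩ := (cyclic_iff α f).mp hcyc (1 / (4 * (KK α + 1))) (by positivity)
  have hlim2 : Tendsto (fun n => KK α * (NN α (p : PowerSeries ℂ) *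
      NN α (PowerSeries.mk (fn n) - PowerSeries.mk f))) atTop (𝓝 0) := by
    simpa using (hlim.const_mul (NN α (p : PowerSeries ℂ))).const_mul (KK α)
  obtain ⟨n, hn⟩ := (hlim2.eventually
    (gt_mem_nhds (show 0 < 1 / (4 * (KK α + 1)) by positivity))).exists
  refine hnc n (cyclic_of_close hα (hFn n) p ?_)
  have e : (p : PowerSeries ℂ) * PowerSeries.mk (fn n) - 1 =
      (p : PowerSeries ℂ) * (PowerSeries.mk (fn n) - PowerSeries.mk f) +
      ((p : PowerSeries ℂ) * PowerSeries.mk f - 1) := by ring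
  have hd := MM_sub (hFn n) hF
  have a1 := NN_add (MM_mul hα (MM_poly α p) hd)
    (MM_sub (MM_mul hα (MM_poly α p) hF) (MM_one α))
  rw [← e] at a1
  have a2 := NN_mul hα (MM_poly α p) hd
  have a3 : NN α ((p : PowerSeries ℂ) * PowerSeries.mk (fn n) - 1) < 1 / (KK α + 1) := by
    have : 1 / (KK α + 1) = 4 * (1 / (4 * (KK α + 1))) := by field_simp
    rw [this]; linarith
  rw [lt_div_iff₀ (by positivity)] at a3
  nlinarith [NN_nonneg α ((p : PowerSeries ℂ) * PowerSeries.mk (fn n) - 1)]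
end
end

section
/- Let α ≤ 1. For each integer n ≥ 1 let f_n(z) = 1 − 1/n − z and let f(z) = 1 − z. Then each f_n is not cyclic for D_α, ‖f_n − f‖_α → 0 as n → ∞, and f is cyclic for D_α. In particular, for every α ≤ 1 there exists a sequence of non-cyclic functions in D_α converging in norm to a cyclic function. -/
open Filter Topology

noncomputable section

lemma mulCoeff_poly (p q : Polynomial ℂ) (k : ℕ) :
    mulCoeff p.coeff q.coeff k = (p * q).coeff k := by
  rw [Polynomial.coeff_mul, Finset.Nat.sum_antidiagonal_eq_sum_range_succ_mk]
  rfl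

lemma fcoeff_eq (w : ℂ) :
    (fun k : ℕ => if k = 0 then w else if k = 1 then (-1 : ℂ) else 0)
      = (Polynomial.C w - Polynomial.X).coeff := by
  funext k
  rcases k with _ | _ | k <;> simp [Polynomial.coeff_X, Polynomial.coeff_C]

lemma fun_eq_poly (p : Polynomial ℂ) (w : ℂ) :
    (fun k => mulCoeff p.coeff
      (fun k : ℕ => if k = 0 then w else if k = 1 then (-1 : ℂ) else 0) k - oneCoeff k)
      = (p * (Polynomial.C w - Polynomial.X) - 1).coeff := by
  rw [fcoeff_eq]
  funext k
  rw [mulCoeff_poly, Polynomial.coeff_sub, Polynomial.coeff_one, oneCoeff]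

lemma DNorm_poly (α : ℝ) (g : Polynomial ℂ) (N : ℕ) (hN : g.natDegree < N) :
    DNorm α g.coeff
      = Real.sqrt (∑ k ∈ Finset.range N, ‖g.coeff k‖ ^ 2 * ((k : ℝ) + 1) ^ α) := by
  unfold DNorm
  rw [tsum_eq_sum]
  intro k hk
  have : g.natDegree < k := by
    simp only [Finset.mem_range, not_lt] at hk
    omega
  simp [Polynomial.coeff_eq_zero_of_natDegree_lt this]

lemma summable_kern (α w : ℝ) (h0 : 0 ≤ w) (h1 : w < 1) :
    Summable (fun k : ℕ => (w ^ k) ^ 2 * ((k : ℝ) + 1) ^ (-α)) := by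
  obtain ⟨m, hm⟩ := exists_nat_ge (-α)
  have hs : Summable (fun k : ℕ => 2 ^ m * (((k : ℝ) ^ m) * (w ^ 2) ^ k) + (w ^ 2) ^ k) := by
    have hw : ‖w ^ 2‖ < 1 := by
      rw [Real.norm_of_nonneg (by positivity)]
      nlinarith
    exact ((summable_pow_mul_geometric_of_norm_lt_one m hw).mul_left _).add
      (summable_geometric_of_norm_lt_one hw)
  refine Summable.of_nonneg_of_le (fun k => by positivity) (fun k => ?_) hs
  have e1 : ((k : ℝ) + 1) ^ (-α) ≤ ((k : ℝ) + 1) ^ m := by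
    rw [← Real.rpow_natCast]
    exact Real.rpow_le_rpow_of_exponent_le (by linarith [(Nat.cast_nonneg k : (0:ℝ) ≤ k)]) hm
  have e2 : ((k : ℝ) + 1) ^ m ≤ 2 ^ m * (k : ℝ) ^ m + 1 := by
    rcases Nat.eq_zero_or_pos k with rfl | hk
    · simp
    · have hk' : (1 : ℝ) ≤ k := by exact_mod_cast hk
      have : ((k : ℝ) + 1) ^ m ≤ (2 * k) ^ m := by
        gcongr
        linarith
      rw [mul_pow] at this
      linarith
  have e3 : (w ^ k) ^ 2 = (w ^ 2) ^ k := by ring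
  rw [e3]
  have := mul_le_mul_of_nonneg_left (e1.trans e2) (by positivity : 0 ≤ (w ^ 2) ^ k)
  linarith

lemma eval_bound (α w : ℝ) (h0 : 0 ≤ w) (h1 : w < 1) (g : Polynomial ℂ) :
    ‖g.eval (w : ℂ)‖ ^ 2 ≤
      DNorm α g.coeff ^ 2 * ∑' k : ℕ, (w ^ k) ^ 2 * ((k : ℝ) + 1) ^ (-α) := by
  have hnn : 0 ≤ ∑ k ∈ Finset.range (g.natDegree + 1),
      ‖g.coeff k‖ ^ 2 * ((k : ℝ) + 1) ^ α := Finset.sum_nonneg fun k _ => by positivity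
  rw [DNorm_poly α g (g.natDegree + 1) (by omega), Real.sq_sqrt hnn,
    Polynomial.eval_eq_sum_range]
  have a1 : ‖∑ k ∈ Finset.range (g.natDegree + 1), g.coeff k * (w : ℂ) ^ k‖ ≤
      ∑ k ∈ Finset.range (g.natDegree + 1),
        (‖g.coeff k‖ * ((k : ℝ) + 1) ^ (α / 2)) * (w ^ k * ((k : ℝ) + 1) ^ (-α / 2)) := by
    refine (norm_sum_le _ _).trans (le_of_eq (Finset.sum_congr rfl fun k _ => ?_))
    have hk : (0 : ℝ) < (k : ℝ) + 1 := by positivity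
    have : ((k : ℝ) + 1) ^ (α / 2) * ((k : ℝ) + 1) ^ (-α / 2) = 1 := by
      rw [← Real.rpow_add hk]
      simp [neg_div]
    rw [norm_mul, norm_pow, Complex.norm_real, Real.norm_of_nonneg h0]
    linear_combination (-(‖g.coeff k‖ * w ^ k)) * this
  have sqr : ∀ (k : ℕ) (b : ℝ), (((k : ℝ) + 1) ^ (b / 2)) ^ 2 = ((k : ℝ) + 1) ^ b := by
    intro k b
    rw [← Real.rpow_natCast, ← Real.rpow_mul (by positivity)]
    congr 1
    push_cast
    ring
  calc _ ≤ _ := pow_le_pow_left₀ (norm_nonneg _) a1 2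
    _ ≤ _ := Finset.sum_mul_sq_le_sq_mul_sq _ _ _
    _ ≤ _ := by
      simp only [mul_pow, sqr]
      refine mul_le_mul_of_nonneg_left ?_ hnn
      have := (summable_kern α w h0 h1).sum_le_tsum (Finset.range (g.natDegree + 1))
        (fun k _ => by positivity)
      simpa [mul_pow] using this

lemma not_cyclic (α w : ℝ) (h0 : 0 ≤ w) (h1 : w < 1) :
    ¬ Cyclic α (fun k => if k = 0 then (w : ℂ) else if k = 1 then (-1 : ℂ) else 0) := by
  rintro ⟨p, hp⟩
  simp only [fun_eq_poly] at hp
  have h2 := (hp.pow 2).mul_const (∑' k : ℕ, (w ^ k) ^ 2 * ((k : ℝ) + 1) ^ (-α))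
  have h3 := ge_of_tendsto' (b := (1 : ℝ)) h2 (fun n => by
    have := eval_bound α w h0 h1 (p n * (Polynomial.C (w : ℂ) - Polynomial.X) - 1)
    simpa using this)
  norm_num at h3

lemma cyclic_one (α : ℝ) (hα : α ≤ 1) :
    Cyclic α (fun k => if k = 0 then (1 : ℂ) else if k = 1 then (-1 : ℂ) else 0) := by
  let H : ℕ → ℝ := fun n => ∑ i ∈ Finset.range (n + 1), 1 / ((i : ℝ) + 1)
  have hH : Tendsto H atTop atTop :=
    Real.tendsto_sum_range_one_div_nat_succ_atTop.comp (tendsto_add_atTop_nat 1)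
  have hpos : ∀ n, 0 < H n := fun n =>
    Finset.sum_pos (fun i _ => by positivity) ⟨0, by simp⟩
  let c : ℕ → ℕ → ℝ := fun n k => 1 / ((k : ℝ) + 1) / H n
  let q : ℕ → Polynomial ℂ := fun n =>
    ∑ k ∈ Finset.range (n + 1), Polynomial.monomial k (c n k : ℂ)
  have hq1 : ∀ n, (q n).eval 1 = 1 := by
    intro n
    simp only [q, Polynomial.eval_finsetSum, Polynomial.eval_monomial, one_pow, mul_one]
    rw [← Complex.ofReal_sum, ← Finset.sum_div]
    rw [div_self (hpos n).ne', Complex.ofReal_one]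
  have hqc : ∀ n k, (q n).coeff k = if k < n + 1 then (c n k : ℂ) else 0 := by
    intro n k
    simp [q, Polynomial.coeff_monomial]
  have hdvd : ∀ n, ∃ p : Polynomial ℂ, p * (Polynomial.C 1 - Polynomial.X) - 1 = - q n := by
    intro n
    have : (Polynomial.X - Polynomial.C (1 : ℂ)) ∣ (q n - 1) := by
      rw [Polynomial.dvd_iff_isRoot]
      simp [hq1]
    obtain ⟨r, hr⟩ := this
    refine ⟨r, ?_⟩
    linear_combination hr
  choose p hp using hdvd
  refine ⟨p, ?_⟩
  simp only [fun_eq_poly, hp]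
  have hlim : Tendsto (fun n => Real.sqrt (1 / H n)) atTop (𝓝 0) := by
    have := (hH.inv_tendsto_atTop).sqrt
    simpa using this
  refine squeeze_zero (fun n => Real.sqrt_nonneg _) (fun n => ?_) hlim
  have hdeg : (- q n).natDegree < n + 1 := by
    rw [Polynomial.natDegree_neg, Nat.lt_succ_iff, Polynomial.natDegree_le_iff_coeff_eq_zero]
    intro k hk
    rw [hqc, if_neg (by omega)]
  rw [DNorm_poly α _ (n + 1) hdeg]
  apply Real.sqrt_le_sqrt
  have hsum : 1 / H n = ∑ k ∈ Finset.range (n + 1), 1 / ((k : ℝ) + 1) / (H n) ^ 2 := by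
    rw [← Finset.sum_div]
    change 1 / H n = H n / (H n) ^ 2
    have := (hpos n).ne'
    field_simp
  rw [hsum]
  refine Finset.sum_le_sum fun k hk => ?_
  have hn := hpos n
  have e : ((k : ℝ) + 1) ^ α ≤ (k : ℝ) + 1 := by
    have := Real.rpow_le_rpow_of_exponent_le
      (by linarith [(Nat.cast_nonneg k : (0:ℝ) ≤ k)] : (1 : ℝ) ≤ (k : ℝ) + 1) hα
    simpa using this
  rw [Polynomial.coeff_neg, norm_neg, hqc, if_pos (Finset.mem_range.1 hk), Complex.norm_real,
    Real.norm_of_nonneg (by positivity)]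
  calc _ ≤ (c n k) ^ 2 * ((k : ℝ) + 1) := by gcongr
    _ = _ := by
      simp only [c]
      field_simp

/-- For `α ≤ 1`, the non-cyclic functions `f_n(z) = 1 - 1/n - z` converge in `D_α` to the
cyclic function `f(z) = 1 - z`. -/
theorem noncyclic_to_cyclic (α : ℝ) (hα : α ≤ 1) :
    (∀ n : ℕ, 1 ≤ n →
      ¬ Cyclic α (fun k => if k = 0 then (1 : ℂ) - 1 / (n : ℂ)
        else if k = 1 then (-1 : ℂ) else 0)) ∧
    Tendsto (fun n : ℕ => DNorm α (fun k =>
        (if k = 0 then (1 : ℂ) - 1 / (n : ℂ) else if k = 1 then (-1 : ℂ) else 0) -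
        (if k = 0 then (1 : ℂ) else if k = 1 then (-1 : ℂ) else 0))) atTop (𝓝 0) ∧
    Cyclic α (fun k => if k = 0 then (1 : ℂ) else if k = 1 then (-1 : ℂ) else 0) := by
  refine ⟨fun n hn => ?_, ?_, cyclic_one α hα⟩
  · have hn' : (1 : ℝ) ≤ n := by exact_mod_cast hn
    have h := not_cyclic α (1 - 1 / (n : ℝ))
      (by
        have : 1 / (n : ℝ) ≤ 1 := by
          rw [div_le_one (by linarith)]
          exact hn'
        linarith)
      (by
        have : 0 < 1 / (n : ℝ) := by positivity
        linarith)
    push_cast at h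
    exact h
  · have h : ∀ n : ℕ, DNorm α (fun k =>
        (if k = 0 then (1 : ℂ) - 1 / (n : ℂ) else if k = 1 then (-1 : ℂ) else 0) -
        (if k = 0 then (1 : ℂ) else if k = 1 then (-1 : ℂ) else 0)) = 1 / (n : ℝ) := by
      intro n
      unfold DNorm
      rw [tsum_eq_single 0]
      · simp
      · intro k hk
        simp [hk]
    simp only [h]
    exact tendsto_one_div_atTop_nhds_zero_nat
end
end
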